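/- arXiv:1207.6785 — 2 statements merged into one kernel-verified Lean document; each statement's English description precedes it below -/
import Mathlib

section
/- There exists δ > 0 such that for every finite set A ⊆ W_δ = {z ∈ ℂ : Re z > 0 and |Im z| < δ·Re z} with |A| ≥ 2, every subset L ⊆ A : A with |L| ≥ 2, and every minimum spanning tree T on L (where ℂ is identified with the Euclidean plane ℝ²), one has |A + A|² ≥ Σ_{{l₁,l₂} ∈ edges(T)} n(l₁)·n(l₂). -/
/-! Attach to an edge `{l₁, l₂}` of the tree and to realisations `(x₁, l₁ x₁)`, `(x₂, l₂ x₂)` of its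
endpoints the sum `(x₁ + x₂, l₁ x₁ + l₂ x₂) ∈ (A + A) × (A + A)`. The claim follows once this map
is injective up to swapping the two summands. For a fixed edge this is linear algebra, as
`l₁ ≠ l₂` (`decomposition_unique`).

For two different edges, a collision gives a point `p = (l₁ x₁ + l₂ x₂) / (x₁ + x₂)`, a weighted mean
of the endpoints of either edge with weights of almost equal argument. So, seen from `p`, the
endpoints of each edge lie in almost opposite directions. Label the edges `a b` and `c d` so that
`b` and `c` are the endpoints facing each other in the tree. Exchanging an edge for another one
across the same cut shows (`IsMST.dist_le`)
`|ab| ≤ |ac|`, `|ab| ≤ |ad|`, `|dc| ≤ |da|`, `|dc| ≤ |db|`.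
Since `|ad|` is at least both edge lengths, the angle `a p d` is at least `60°`; hence the angles
`a p c` and `d p b` are at most slightly more than `120°`. Then `|ab| ≤ |ac|` forces
`|pb| < |pc|`, while `|dc| ≤ |db|` forces `|pc| < |pb|`, a contradiction
(`lens_disjoint_zero`). The opening `δ = 1/32` is small enough for this. -/

open scoped Pointwise Classical

/-- The open wedge `W_δ = {z : Re z > 0, |Im z| < δ · Re z}`. -/
def wedge (δ : ℝ) : Set ℂ := {z : ℂ | 0 < z.re ∧ |z.im| < δ * z.re}

/-- `n(l)`: the number of realisations of the ratio `l`, i.e. the number of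
pairs `(x, y) ∈ A × A` with `y / x = l`. -/
noncomputable def nRatio (A : Finset ℂ) (l : ℂ) : ℕ :=
  ((A ×ˢ A).filter fun p => p.2 / p.1 = l).card

/-- Total Euclidean length of the edges of a graph `G` whose vertices are
mapped to the Euclidean plane (identified with `ℂ`) by `f`. -/
noncomputable def graphLength {V : Type*} [Fintype V] (f : V → ℂ) (G : SimpleGraph V) : ℝ := by
  classical
  exact (∑ p : V × V, if G.Adj p.1 p.2 then dist (f p.1) (f p.2) else 0) / 2

/-- `T` is a minimum spanning tree on the finite point set `V` of the Euclidean
plane (identified with `ℂ`). -/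
def IsMST (V : Finset ℂ) (T : SimpleGraph {x // x ∈ V}) : Prop :=
  T.IsTree ∧ ∀ G : SimpleGraph {x // x ∈ V}, G.IsTree →
    graphLength Subtype.val T ≤ graphLength Subtype.val G

/-- The sum of `f l₁ l₂` over the (unordered) edges `{l₁, l₂}` of `G`,
for a symmetric function `f`. -/
noncomputable def edgeSum {V : Type*} [Fintype V] (G : SimpleGraph V) (f : V → V → ℝ) : ℝ := by
  classical
  exact (∑ p : V × V, if G.Adj p.1 p.2 then f p.1 p.2 else 0) / 2

/-! ### Nearly opposite vectors -/

/-- In the wedge of opening `1/32`, a point is close to its modulus. -/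
lemma norm_sub_norm_le_of_mem_wedge {x : ℂ} (hx : x ∈ wedge (1 / 32)) :
    ‖x - (‖x‖ : ℂ)‖ ≤ 1 / 16 * ‖x‖ := by
  obtain ⟨h0, h1⟩ := hx
  have hre : x.re ≤ ‖x‖ := Complex.re_le_norm x
  have hn : ‖x‖ ≤ |x.re| + |x.im| := Complex.norm_le_abs_re_add_abs_im x
  rw [abs_of_pos h0] at hn
  have h2 := Complex.norm_le_abs_re_add_abs_im (x - (‖x‖ : ℂ))
  simp only [Complex.sub_re, Complex.sub_im, Complex.ofReal_re, Complex.ofReal_im, sub_zero] at h2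
  rw [abs_of_nonpos (by linarith : x.re - ‖x‖ ≤ 0)] at h2
  linarith

lemma ne_zero_of_mem_wedge {δ : ℝ} {x : ℂ} (hx : x ∈ wedge δ) : x ≠ 0 := by
  rintro rfl
  simpa using hx.1

/-- If `x a + y b = 0` with `x, y` in the wedge, then `a` and `b` point in almost opposite
directions. -/
lemma almost_opposite {x y a b : ℂ} (hx : x ∈ wedge (1 / 32)) (hy : y ∈ wedge (1 / 32))
    (h : x * a + y * b = 0) :
    ‖‖a‖ • b + ‖b‖ • a‖ ≤ 1 / 8 * (‖a‖ * ‖b‖) := by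
  have hy0 := ne_zero_of_mem_wedge hy
  obtain ⟨m, rfl⟩ : ∃ m, a = y * m := ⟨a / y, by field_simp⟩
  obtain rfl : b = -(x * m) := by
    apply mul_left_cancel₀ hy0
    linear_combination h
  have e : ‖y * m‖ • (-(x * m)) + ‖-(x * m)‖ • (y * m)
      = ((‖m‖ : ℂ) * m) * ((‖x‖ : ℂ) * (y - (‖y‖ : ℂ)) - (‖y‖ : ℂ) * (x - (‖x‖ : ℂ))) := by
    simp only [norm_neg, norm_mul, Complex.real_smul, Complex.ofReal_mul]
    ring
  rw [e]
  have h1 : ‖(‖x‖ : ℂ) * (y - (‖y‖ : ℂ)) - (‖y‖ : ℂ) * (x - (‖x‖ : ℂ))‖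
      ≤ ‖x‖ * (1 / 16 * ‖y‖) + ‖y‖ * (1 / 16 * ‖x‖) := by
    refine (norm_sub_le _ _).trans ?_
    rw [norm_mul, norm_mul, Complex.norm_real, Complex.norm_real, norm_norm, norm_norm]
    gcongr
    · exact norm_sub_norm_le_of_mem_wedge hy
    · exact norm_sub_norm_le_of_mem_wedge hx
  rw [norm_mul, norm_mul, Complex.norm_real, norm_norm, norm_neg, norm_mul, norm_mul]
  calc _ ≤ ‖m‖ * ‖m‖ * (‖x‖ * (1 / 16 * ‖y‖) + ‖y‖ * (1 / 16 * ‖x‖)) := by gcongr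
    _ = _ := by ring

/-- Pairing with `w` an almost opposite pair: `⟪b, w⟫ / ‖b‖` is close to `-⟪a, w⟫ / ‖a‖`. -/
lemma abs_inner_add_le {a b : ℂ} (h : ‖‖a‖ • b + ‖b‖ • a‖ ≤ 1 / 8 * (‖a‖ * ‖b‖)) (w : ℂ) :
    |‖a‖ * inner ℝ b w + ‖b‖ * inner ℝ a w| ≤ 1 / 8 * (‖a‖ * ‖b‖) * ‖w‖ := by
  have e : ‖a‖ * inner ℝ b w + ‖b‖ * inner ℝ a w = inner ℝ (‖a‖ • b + ‖b‖ • a) w := by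
    rw [inner_add_left, real_inner_smul_left, real_inner_smul_left]
  rw [e]
  refine (abs_real_inner_le_norm _ _).trans ?_
  gcongr

/-- An almost opposite pair is almost as far apart as its two moduli together. -/
lemma sq_norm_sub_ge {a b : ℂ} (ha : a ≠ 0)
    (h : ‖‖a‖ • b + ‖b‖ • a‖ ≤ 1 / 8 * (‖a‖ * ‖b‖)) :
    ‖a‖ ^ 2 + ‖b‖ ^ 2 + 7 / 4 * (‖a‖ * ‖b‖) ≤ ‖a - b‖ ^ 2 := by
  have h1 := (abs_le.1 (abs_inner_add_le h a)).2
  rw [real_inner_self_eq_norm_sq] at h1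
  have ha' : 0 < ‖a‖ := norm_pos_iff.2 ha
  have h2 : inner ℝ b a ≤ -(7 / 8) * (‖a‖ * ‖b‖) := by
    refine le_of_mul_le_mul_left ?_ ha'
    linarith [h1, (by ring : ‖a‖ * (-(7 / 8) * (‖a‖ * ‖b‖)) =
      1 / 8 * (‖a‖ * ‖b‖) * ‖a‖ - ‖b‖ * ‖a‖ ^ 2)]
  rw [norm_sub_sq_real, real_inner_comm]
  linarith

/-- If `a`, `d` make an angle of at least `60°` and `c` is almost opposite to `d`, then
`a`, `c` make an angle not much larger than `120°`, so `|a - c|` is not too large. -/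
lemma sq_norm_sub_le {a c d : ℂ} (hd : d ≠ 0) (had : inner ℝ a d ≤ 1 / 2 * (‖a‖ * ‖d‖))
    (h : ‖‖d‖ • c + ‖c‖ • d‖ ≤ 1 / 8 * (‖d‖ * ‖c‖)) :
    ‖a - c‖ ^ 2 ≤ ‖a‖ ^ 2 + ‖c‖ ^ 2 + 5 / 4 * (‖a‖ * ‖c‖) := by
  have h1 := (abs_le.1 (abs_inner_add_le h a)).1
  have hd' : 0 < ‖d‖ := norm_pos_iff.2 hd
  rw [real_inner_comm] at had
  have h3 : ‖c‖ * inner ℝ d a ≤ ‖c‖ * (1 / 2 * (‖a‖ * ‖d‖)) := by gcongr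
  have h2 : -(5 / 8) * (‖a‖ * ‖c‖) ≤ inner ℝ c a := by
    refine le_of_mul_le_mul_left ?_ hd'
    linarith [(by ring : ‖d‖ * (-(5 / 8) * (‖a‖ * ‖c‖)) =
      -(1 / 8 * (‖d‖ * ‖c‖) * ‖a‖) - ‖c‖ * (1 / 2 * (‖a‖ * ‖d‖)))]
  rw [norm_sub_sq_real, real_inner_comm]
  linarith

/-- The geometric core, seen from a common point placed at the origin: the thin lenses around
`[a, b]` and `[c, d]` cannot both contain `0` if the distances satisfy the inequalities forced
by a minimum spanning tree in which the edges occur in the order `a b … c d`. -/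
lemma lens_disjoint_zero {x₁ x₂ y₁ y₂ a b c d : ℂ}
    (hx₁ : x₁ ∈ wedge (1 / 32)) (hx₂ : x₂ ∈ wedge (1 / 32))
    (hy₁ : y₁ ∈ wedge (1 / 32)) (hy₂ : y₂ ∈ wedge (1 / 32))
    (hab : a ≠ b) (hcd : c ≠ d)
    (hx : x₁ * a + x₂ * b = 0) (hy : y₁ * c + y₂ * d = 0)
    (h₁ : ‖a - b‖ ≤ ‖a - c‖) (h₂ : ‖a - b‖ ≤ ‖a - d‖)
    (h₃ : ‖d - c‖ ≤ ‖d - a‖) (h₄ : ‖d - c‖ ≤ ‖d - b‖) : False := by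
  have ha : a ≠ 0 := by
    rintro rfl
    have : b = 0 := by simpa [ne_zero_of_mem_wedge hx₂] using hx
    exact hab this.symm
  have hd : d ≠ 0 := by
    rintro rfl
    have : c = 0 := by simpa [ne_zero_of_mem_wedge hy₁] using hy
    exact hcd this
  have oab := almost_opposite hx₁ hx₂ hx
  have odc := almost_opposite (a := d) (b := c) hy₂ hy₁ (by linear_combination hy)
  have Lab := sq_norm_sub_ge ha oab
  have Ldc := sq_norm_sub_ge hd odc
  have pa := norm_pos_iff.2 ha
  have pd := norm_pos_iff.2 hd
  have nb := norm_nonneg b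
  have nc := norm_nonneg c
  have q₁ := pow_le_pow_left₀ (norm_nonneg _) h₁ 2
  have q₂ := pow_le_pow_left₀ (norm_nonneg _) h₂ 2
  have q₃ := pow_le_pow_left₀ (norm_nonneg _) h₃ 2
  have q₄ := pow_le_pow_left₀ (norm_nonneg _) h₄ 2
  have mab := mul_nonneg pa.le nb
  have mdc := mul_nonneg pd.le nc
  -- `a d` is at least as long as both edges, so the angle between `a` and `d` is at least `60°`
  have ang : inner ℝ a d ≤ 1 / 2 * (‖a‖ * ‖d‖) := by
    have e₁ := norm_sub_sq_real a d
    have e₂ := norm_sub_sq_real d a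
    rw [real_inner_comm] at e₂
    rcases le_total ‖a‖ ‖d‖ with h | h
    · nlinarith
    · nlinarith
  have ang' : inner ℝ d a ≤ 1 / 2 * (‖d‖ * ‖a‖) := by
    rw [real_inner_comm]; linarith
  have Uac := sq_norm_sub_le hd ang odc
  have Udb := sq_norm_sub_le ha ang' oab
  have hb : b ≠ 0 := by
    rintro rfl
    have : a = 0 := by simpa [ne_zero_of_mem_wedge hx₁] using hx
    exact ha this
  have pb := norm_pos_iff.2 hb
  -- `‖c‖ ≤ ‖b‖` contradicts `|ab| ≤ |ac|`, and `‖b‖ < ‖c‖` contradicts `|dc| ≤ |db|`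
  rcases le_or_gt ‖c‖ ‖b‖ with h | h
  · nlinarith [mul_le_mul_of_nonneg_left h pa.le, mul_pos pa pb, mul_self_le_mul_self nc h]
  · nlinarith [mul_le_mul_of_nonneg_left h.le pd.le, mul_pos pd (pb.trans h),
      mul_self_le_mul_self nb h.le]

/-- Under these distance inequalities, two sums `(x₁, a x₁) + (x₂, b x₂)` and
`(y₁, c y₁) + (y₂, d y₂)` cannot agree: the common quotient of their coordinates would lie
in the thin lenses around both edges. -/
lemma lens_disjoint {x₁ x₂ y₁ y₂ a b c d : ℂ}
    (hx₁ : x₁ ∈ wedge (1 / 32)) (hx₂ : x₂ ∈ wedge (1 / 32))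
    (hy₁ : y₁ ∈ wedge (1 / 32)) (hy₂ : y₂ ∈ wedge (1 / 32))
    (hab : a ≠ b) (hcd : c ≠ d)
    (hs : x₁ + x₂ = y₁ + y₂) (ht : x₁ * a + x₂ * b = y₁ * c + y₂ * d)
    (h₁ : dist a b ≤ dist a c) (h₂ : dist a b ≤ dist a d)
    (h₃ : dist d c ≤ dist d a) (h₄ : dist d c ≤ dist d b) : False := by
  have h0 : x₁ + x₂ ≠ 0 := by
    intro h
    have := congrArg Complex.re h
    simp only [Complex.add_re, Complex.zero_re] at this
    linarith [hx₁.1, hx₂.1]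
  obtain ⟨p, hp⟩ : ∃ p, x₁ * a + x₂ * b = (x₁ + x₂) * p :=
    ⟨(x₁ * a + x₂ * b) / (x₁ + x₂), by field_simp⟩
  simp only [dist_eq_norm] at h₁ h₂ h₃ h₄
  refine lens_disjoint_zero (a := a - p) (b := b - p) (c := c - p) (d := d - p)
    hx₁ hx₂ hy₁ hy₂ ?_ ?_ ?_ ?_ ?_ ?_ ?_ ?_
  · simpa using hab
  · simpa using hcd
  · linear_combination hp
  · linear_combination hp - ht + p * hs
  all_goals simpa only [sub_sub_sub_cancel_right]

/-! ### The exchange property of minimum spanning trees -/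

open SimpleGraph in
/-- Exchange: replacing the edge `a b` of a tree by `a c`, where `c` is on the side of `b`, gives
a tree again. -/
lemma isTree_exchange {V : Type*} {T : SimpleGraph V} (hT : T.IsTree) {a b c : V}
    (hab : T.Adj a b) (hbc : (T.deleteEdges {s(a, b)}).Reachable b c) :
    (T.deleteEdges {s(a, b)} ⊔ edge a c).IsTree := by
  have hbr : ¬ (T.deleteEdges {s(a, b)}).Reachable a b :=
    isAcyclic_iff_forall_adj_isBridge.1 hT.isAcyclic hab
  have hac : ¬ (T.deleteEdges {s(a, b)}).Reachable a c := fun h => hbr (h.trans hbc.symm)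
  have hne : a ≠ c := by rintro rfl; exact hac (Reachable.refl _)
  have := hT.connected.nonempty
  refine ⟨⟨?_⟩, (hT.isAcyclic.anti (deleteEdges_le _)).sup_edge_of_not_reachable hac⟩
  set F := T.deleteEdges {s(a, b)} with hF
  have hac' : (F ⊔ edge a c).Reachable a b := by
    have e : (F ⊔ edge a c).Adj a c := by simp [edge_adj, hne]
    exact e.reachable.trans (hbc.symm.mono le_sup_left)
  have key : ∀ u v, T.Adj u v → (F ⊔ edge a c).Reachable u v := by
    intro u v huv
    by_cases h : s(u, v) = s(a, b)
    · rcases Sym2.eq_iff.1 h with ⟨rfl, rfl⟩ | ⟨rfl, rfl⟩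
      · exact hac'
      · exact hac'.symm
    · have : F.Adj u v := by
        rw [hF, deleteEdges_adj]; exact ⟨huv, h⟩
      exact this.reachable.mono le_sup_left
  intro u v
  obtain ⟨w⟩ := hT.connected.preconnected u v
  induction w with
  | nil => exact Reachable.refl _
  | cons h _ ih => exact (key _ _ h).trans ih

open SimpleGraph in
/-- An edge `a b` of a minimum spanning tree is no longer than `a c` for `c` on the side of `b`. -/
lemma IsMST.dist_le {L : Finset ℂ} {T : SimpleGraph {x // x ∈ L}} (hT : IsMST L T)
    {a b c : {x // x ∈ L}} (hab : T.Adj a b)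
    (hbc : (T.deleteEdges {s(a, b)}).Reachable b c) :
    dist (a : ℂ) b ≤ dist (a : ℂ) c := by
  have hlen := hT.2 _ (isTree_exchange hT.1 hab hbc)
  have hbr : ¬ (T.deleteEdges {s(a, b)}).Reachable a b :=
    isAcyclic_iff_forall_adj_isBridge.1 hT.1.isAcyclic hab
  have hne : a ≠ c := by rintro rfl; exact hbr hbc.symm
  have hne' := hab.ne
  unfold graphLength at hlen
  set d : {x // x ∈ L} × {x // x ∈ L} → ℝ := fun p => dist (p.1 : ℂ) p.2 with hd
  have hd0 : ∀ p, 0 ≤ d p := fun p => dist_nonneg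
  -- each unordered edge is counted as two ordered pairs
  have hsum : (∑ p : {x // x ∈ L} × {x // x ∈ L},
      if (T.deleteEdges {s(a, b)} ⊔ edge a c).Adj p.1 p.2 then d p else 0)
      ≤ ∑ p : {x // x ∈ L} × {x // x ∈ L}, ((if T.Adj p.1 p.2 then d p else 0)
        - (if p = (a, b) then d p else 0) - (if p = (b, a) then d p else 0)
        + (if p = (a, c) then d p else 0) + (if p = (c, a) then d p else 0)) := by
    refine Finset.sum_le_sum fun p _ => ?_
    have h0 := hd0 p
    obtain ⟨u, v⟩ := p
    have hba := hab.symm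
    simp only [sup_adj, deleteEdges_adj, edge_adj, Set.mem_singleton_iff, Sym2.eq_iff,
      Prod.mk.injEq]
    by_cases h1 : u = a ∧ v = b
    · obtain ⟨rfl, rfl⟩ := h1
      by_cases h3 : v = c <;> simp_all <;> split_ifs <;> simp_all
    by_cases h2 : u = b ∧ v = a
    · obtain ⟨rfl, rfl⟩ := h2
      by_cases h3 : u = c <;> simp_all <;> split_ifs <;> simp_all
    by_cases h3 : u = a ∧ v = c
    · obtain ⟨rfl, rfl⟩ := h3
      simp_all
      split_ifs <;> simp_all
    by_cases h4 : u = c ∧ v = a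
    · obtain ⟨rfl, rfl⟩ := h4
      simp_all
      split_ifs <;> simp_all
    simp [h1, h2, h3, h4]
  simp only [Finset.sum_add_distrib, Finset.sum_sub_distrib, Finset.sum_ite_eq',
    Finset.mem_univ, if_true] at hsum
  have e1 : d (b, a) = d (a, b) := dist_comm _ _
  have e2 : d (c, a) = d (a, c) := dist_comm _ _
  change d (a, b) ≤ d (a, c)
  have hlen' := (div_le_div_iff_of_pos_right (by norm_num : (0 : ℝ) < 2)).1 hlen
  have := hlen'.trans (le_of_eq_of_le (Finset.sum_congr rfl fun p _ => by congr) hsum)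
  linarith

open SimpleGraph in
/-- Deleting an edge `a b` from a connected graph, every vertex stays connected to `a` or `b`. -/
lemma reachable_or_of_connected {V : Type*} {T : SimpleGraph V} (hT : T.Connected) (a b c : V) :
    (T.deleteEdges {s(a, b)}).Reachable a c ∨ (T.deleteEdges {s(a, b)}).Reachable b c := by
  have key : ∀ {u z : V}, T.Walk u z → z = a →
      (T.deleteEdges {s(a, b)}).Reachable a u ∨ (T.deleteEdges {s(a, b)}).Reachable b u := by
    intro u z w hz
    induction w with
    | nil => subst hz; exact Or.inl (Reachable.refl _)
    | @cons u v _ h _ ih =>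
      by_cases he : s(u, v) = s(a, b)
      · rcases Sym2.eq_iff.1 he with ⟨hu, -⟩ | ⟨hu, -⟩
        · exact Or.inl (hu ▸ Reachable.refl _)
        · exact Or.inr (hu ▸ Reachable.refl _)
      · have hvu : (T.deleteEdges {s(a, b)}).Adj v u := by
          rw [deleteEdges_adj]
          exact ⟨h.symm, by rwa [Set.mem_singleton_iff, Sym2.eq_swap]⟩
        exact (ih hz).imp (fun r => r.trans hvu.reachable) (fun r => r.trans hvu.reachable)
  obtain ⟨w⟩ := hT.preconnected c a
  exact key w rfl

/-! ### Sums over distinct edges do not collide -/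

open SimpleGraph in
/-- No collision for two edges met in the order `a b … c d` along the tree. -/
lemma IsMST.no_collision_of_order {L : Finset ℂ} {T : SimpleGraph {x // x ∈ L}} (hT : IsMST L T)
    {a b c d : {x // x ∈ L}} (hab : T.Adj a b) (hcd : T.Adj c d) (hne : s(a, b) ≠ s(c, d))
    (hbc : (T.deleteEdges {s(a, b)}).Reachable b c)
    (hca : (T.deleteEdges {s(c, d)}).Reachable c a)
    {x₁ x₂ y₁ y₂ : ℂ}
    (hx₁ : x₁ ∈ wedge (1 / 32)) (hx₂ : x₂ ∈ wedge (1 / 32))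
    (hy₁ : y₁ ∈ wedge (1 / 32)) (hy₂ : y₂ ∈ wedge (1 / 32))
    (hs : x₁ + x₂ = y₁ + y₂) (ht : x₁ * a + x₂ * b = y₁ * c + y₂ * d) : False := by
  have e₁ : (T.deleteEdges {s(a, b)}).Adj c d := by
    rw [deleteEdges_adj]; exact ⟨hcd, fun h => hne h.symm⟩
  have e₂ : (T.deleteEdges {s(c, d)}).Adj a b := by
    rw [deleteEdges_adj]; exact ⟨hab, fun h => hne h⟩
  have hbd := hbc.trans e₁.reachable
  have hcb := hca.trans e₂.reachable
  rw [Sym2.eq_swap] at hca hcb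
  exact lens_disjoint hx₁ hx₂ hy₁ hy₂ (fun h => hab.ne (Subtype.ext h))
    (fun h => hcd.ne (Subtype.ext h)) hs ht (hT.dist_le hab hbc) (hT.dist_le hab hbd)
    (hT.dist_le hcd.symm hca) (hT.dist_le hcd.symm hcb)

open SimpleGraph in
/-- Sums attached to two distinct edges of a minimum spanning tree differ. -/
lemma IsMST.no_collision {L : Finset ℂ} {T : SimpleGraph {x // x ∈ L}} (hT : IsMST L T)
    {a b c d : {x // x ∈ L}} (hab : T.Adj a b) (hcd : T.Adj c d) (hne : s(a, b) ≠ s(c, d))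
    {x₁ x₂ y₁ y₂ : ℂ}
    (hx₁ : x₁ ∈ wedge (1 / 32)) (hx₂ : x₂ ∈ wedge (1 / 32))
    (hy₁ : y₁ ∈ wedge (1 / 32)) (hy₂ : y₂ ∈ wedge (1 / 32))
    (hs : x₁ + x₂ = y₁ + y₂) (ht : x₁ * a + x₂ * b = y₁ * c + y₂ * d) : False := by
  -- the case where `c` is the endpoint of `c d` facing the edge `a b`
  have half : ∀ {c d : {x // x ∈ L}} {y₁ y₂ : ℂ}, T.Adj c d → s(a, b) ≠ s(c, d) →
      y₁ ∈ wedge (1 / 32) → y₂ ∈ wedge (1 / 32) → x₁ + x₂ = y₁ + y₂ →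
      x₁ * a + x₂ * b = y₁ * c + y₂ * d →
      (T.deleteEdges {s(c, d)}).Reachable c a → False := by
    intro c d y₁ y₂ hcd hne hy₁ hy₂ hs ht hca
    have e₂ : (T.deleteEdges {s(c, d)}).Adj a b := by
      rw [deleteEdges_adj]; exact ⟨hab, fun h => hne h⟩
    rcases reachable_or_of_connected hT.1.connected a b c with h | h
    · refine hT.no_collision_of_order hab.symm hcd (by rwa [Sym2.eq_swap])
        (by rwa [Sym2.eq_swap]) (hca.trans e₂.reachable) hx₂ hx₁ hy₁ hy₂ ?_ ?_
      · linear_combination hs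
      · linear_combination ht
    · exact hT.no_collision_of_order hab hcd hne h hca hx₁ hx₂ hy₁ hy₂ hs ht
  rcases reachable_or_of_connected hT.1.connected c d a with h | h
  · exact half hcd hne hy₁ hy₂ hs ht h
  · refine half hcd.symm (by rwa [Sym2.eq_swap (a := d)]) hy₂ hy₁ ?_ ?_
      (by rwa [Sym2.eq_swap])
    · linear_combination hs
    · linear_combination ht

/-! ### Counting -/

/-- The realisations `(x, y) ∈ A × A` of the ratio `l`. -/
noncomputable def realisations (A : Finset ℂ) (l : ℂ) : Finset (ℂ × ℂ) :=
  (A ×ˢ A).filter fun p => p.2 / p.1 = l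

lemma mem_realisations {A : Finset ℂ} (hA : (A : Set ℂ) ⊆ wedge (1 / 32)) {l : ℂ} {p : ℂ × ℂ}
    (hp : p ∈ realisations A l) :
    p.1 ∈ A ∧ p.2 ∈ A ∧ p.1 ∈ wedge (1 / 32) ∧ p.2 = p.1 * l := by
  simp only [realisations, Finset.mem_filter, Finset.mem_product] at hp
  obtain ⟨⟨h1, h2⟩, rfl⟩ := hp
  have hw := hA h1
  have := ne_zero_of_mem_wedge hw
  exact ⟨h1, h2, hw, by field_simp⟩

/-- For distinct slopes `a ≠ b`, the decomposition of a vector along `(1, a)`, `(1, b)` is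
unique. -/
lemma decomposition_unique {a b x₁ x₂ y₁ y₂ : ℂ} (hab : a ≠ b) (hs : x₁ + x₂ = y₁ + y₂)
    (ht : x₁ * a + x₂ * b = y₁ * a + y₂ * b) : x₁ = y₁ ∧ x₂ = y₂ := by
  have h : x₁ = y₁ := by
    have h0 : (a - b) * (x₁ - y₁) = 0 := by linear_combination ht - b * hs
    exact sub_eq_zero.1 ((mul_eq_zero.1 h0).resolve_left (sub_ne_zero.2 hab))
  exact ⟨h, by linear_combination hs - h⟩

theorem sumset_sq_ge_edge_sum :
    ∃ δ : ℝ, 0 < δ ∧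
      ∀ A : Finset ℂ, (A : Set ℂ) ⊆ wedge δ → 2 ≤ A.card →
      ∀ L : Finset ℂ, L ⊆ A / A → 2 ≤ L.card →
      ∀ T : SimpleGraph {x // x ∈ L}, IsMST L T →
        edgeSum T (fun l₁ l₂ => (nRatio A (l₁ : ℂ) : ℝ) * (nRatio A (l₂ : ℂ) : ℝ)) ≤
          (((A + A).card : ℝ)) ^ 2 := by
  refine ⟨1 / 32, by norm_num, ?_⟩
  intro A hA _ L _ _ T hT
  -- quadruples: an oriented edge together with realisations of its two endpoints
  let S : Finset (Σ _ : {x // x ∈ L} × {x // x ∈ L}, (ℂ × ℂ) × (ℂ × ℂ)) :=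
    (Finset.univ.filter fun e : {x // x ∈ L} × {x // x ∈ L} => T.Adj e.1 e.2).sigma
      fun e => realisations A e.1 ×ˢ realisations A e.2
  let f : (Σ _ : {x // x ∈ L} × {x // x ∈ L}, (ℂ × ℂ) × (ℂ × ℂ)) → ℂ × ℂ :=
    fun s => s.2.1 + s.2.2
  have memS : ∀ s ∈ S, T.Adj s.1.1 s.1.2 ∧ s.2.1 ∈ realisations A s.1.1 ∧
      s.2.2 ∈ realisations A s.1.2 := by
    intro s hs
    simpa [S] using hs
  have hmaps : ∀ s ∈ S, f s ∈ (A + A) ×ˢ (A + A) := by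
    intro s hs
    obtain ⟨_, h1, h2⟩ := memS s hs
    have m1 := mem_realisations hA h1
    have m2 := mem_realisations hA h2
    exact Finset.mem_product.2
      ⟨Finset.add_mem_add m1.1 m2.1, Finset.add_mem_add m1.2.1 m2.2.1⟩
  -- a fibre holds at most one quadruple and its reversal
  have hfib : ∀ q ∈ (A + A) ×ˢ (A + A), (S.filter fun s => f s = q).card ≤ 2 := by
    intro q _
    rcases (S.filter fun s => f s = q).eq_empty_or_nonempty with h | ⟨s, hs⟩
    · rw [h]; simp
    obtain ⟨hsS, hsq⟩ := Finset.mem_filter.1 hs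
    refine (Finset.card_le_card (t := {s, ⟨s.1.swap, s.2.swap⟩}) ?_).trans Finset.card_le_two
    intro r hr
    obtain ⟨hrS, hrq⟩ := Finset.mem_filter.1 hr
    obtain ⟨⟨a, b⟩, ⟨X₁, X₂⟩⟩ := s
    obtain ⟨⟨c, d⟩, ⟨Y₁, Y₂⟩⟩ := r
    obtain ⟨hab, hX₁, hX₂⟩ := memS _ hsS
    obtain ⟨hcd, hY₁, hY₂⟩ := memS _ hrS
    obtain ⟨-, -, wX₁, eX₁⟩ := mem_realisations hA hX₁
    obtain ⟨-, -, wX₂, eX₂⟩ := mem_realisations hA hX₂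
    obtain ⟨-, -, wY₁, eY₁⟩ := mem_realisations hA hY₁
    obtain ⟨-, -, wY₂, eY₂⟩ := mem_realisations hA hY₂
    have heq : X₁ + X₂ = Y₁ + Y₂ := hsq.trans hrq.symm
    have e₁ : X₁.1 + X₂.1 = Y₁.1 + Y₂.1 := congrArg Prod.fst heq
    have e₂ : X₁.2 + X₂.2 = Y₁.2 + Y₂.2 := congrArg Prod.snd heq
    dsimp only at hab hcd wX₁ eX₁ wX₂ eX₂ wY₁ eY₁ wY₂ eY₂
    rw [eX₁, eX₂, eY₁, eY₂] at e₂
    have hab' : (a : ℂ) ≠ b := fun h => hab.ne (Subtype.ext h)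
    by_cases hE : s(a, b) = s(c, d)
    · rcases Sym2.eq_iff.1 hE with ⟨rfl, rfl⟩ | ⟨rfl, rfl⟩
      · obtain ⟨p, q⟩ := decomposition_unique hab' e₁ e₂
        obtain rfl : X₁ = Y₁ := Prod.ext p (by rw [eX₁, eY₁, p])
        obtain rfl : X₂ = Y₂ := Prod.ext q (by rw [eX₂, eY₂, q])
        simp
      · obtain ⟨p, q⟩ := decomposition_unique hab' (e₁.trans (add_comm _ _))
          (e₂.trans (add_comm _ _))
        obtain rfl : X₁ = Y₂ := Prod.ext p (by rw [eX₁, eY₂, p])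
        obtain rfl : X₂ = Y₁ := Prod.ext q (by rw [eX₂, eY₁, q])
        simp
    · exact (hT.no_collision hab hcd hE wX₁ wX₂ wY₁ wY₂ e₁ e₂).elim
  have hcard := Finset.card_le_mul_card_image_of_maps_to hmaps 2 hfib
  rw [Finset.card_product] at hcard
  have hS : (∑ p : {x // x ∈ L} × {x // x ∈ L}, if T.Adj p.1 p.2 then
      ((nRatio A (p.1 : ℂ) : ℝ) * (nRatio A (p.2 : ℂ) : ℝ)) else 0) = (S.card : ℝ) := by
    rw [Finset.card_sigma, ← Finset.sum_filter]
    push_cast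
    refine Finset.sum_congr rfl fun p _ => ?_
    rw [Finset.card_product]
    push_cast
    rfl
  unfold edgeSum
  rw [div_le_iff₀ (by norm_num)]
  have hcard' : (S.card : ℝ) ≤ 2 * (((A + A).card : ℝ) * ((A + A).card : ℝ)) := by
    exact_mod_cast hcard
  calc _ = (S.card : ℝ) := hS
    _ ≤ _ := by linarith [hcard', sq ((A + A).card : ℝ)]
end

section
/- There exist absolute constants C, C' > 0 such that the following holds. Let L ⊆ ℂ be a finite nonempty set of slopes, and for l ∈ L let ℓ_l = {(x, l·x) : x ∈ ℂ} ⊆ ℂ² be the corresponding complex line through the origin. Let N ≥ 1 be a real number, let P be a finite subset of ⋃_{l ∈ L} ℓ_l such that #(P ∩ ℓ_l) ≤ N for every l ∈ L, and let Q ⊆ ℂ² be finite with |Q| ≥ |P| ≥ |L| ≥ N/2. Then for every real number t with C·N ≤ t ≤ |P|, one has #{x ∈ ℂ² : #{(p,q) ∈ P×Q : p + q = x} ≥ t} ≤ C'·|L|^{3/2}·|Q|^{5/2}/t³. -/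
/-!
Write `a = √|L|` and `b = √|Q|`. If `p + q = x` with `p` on the line of slope `l` through the
origin, then `q` lies on the line of slope `l` through `x`. For fixed `l` there are at most
`min (N, |Q ∩ line|)` such pairs, so the number of representations of `x` is at most the sum over
`j` with `2 ^ j ≤ N` of `2 ^ j` times the number of lines through `x` that have slope in `L` and
contain at least `2 ^ j` points of `Q` (`reps_le`). If this sum is at least `t`, then for some `j`
the `j`-th summand is at least `T j`, where the `T j` are geometric weights peaked at
`2 ^ j ≈ b / a` and at the top level, with total sum at most `t`. For one level, the
Szemerédi–Trotter theorem bounds the number of points that are rich for the rich lines; the number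
of these lines is bounded trivially by `a² b² / 2 ^ j` if `2 ^ j ≤ b / a` and by the dual
Szemerédi–Trotter theorem otherwise (`level_bound`). The resulting bounds decay geometrically away
from the two peaks, fast enough to pay for the weights, and sum to a multiple of `a³ b⁵ / t³`. The
hypothesis `C N ≤ t` ensures that the Szemerédi–Trotter theorem is only applied with richness at
least `2`, and `N ≤ 2 |L|` is used at the top level.

The complex Szemerédi–Trotter theorem (`szemeredi_trotter`) is proved for rich points: `M` lines
have `O(M² / r³ + M / r)` points on at least `r` of them. The main idea is a replacement for the
planar crossing argument. For a point `x` of the set `X` and a line `l` through `x`, consider the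
disc in `l` centred at `x` that reaches to the nearest other point of `X` on `l`. A point of `l` lies
in at most `9` of these discs (`overlap`), so the number of triples `(x, l, μ)` where `μ` is a line
meeting `l` inside the disc of `x` is at most `9 M²` (`sum_hit_le`). Conversely, let `A, B, C, D` be
four families of lines whose slopes lie in cells that are monotone in both the real and the
imaginary part. Take `l ∈ B` and `l' ∈ C` through `x`. If the disc on `l` is at least as large as the
one on `l'`, then every line of `D` through the nearest neighbour of `x` on `l'` meets `l` in the disc
of `x`, because `l'` is closer in slope to `D` than `l` is (`hit_of_slopes`); otherwise the roles are
exchanged and `A` is used. Hence a point rich in all four families produces `≫ r³` triples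
(`good_point_hits`), which gives `class_bound`.

To find such families, the slopes are cut into `a` vertical and `a` horizontal strips with equally
many lines each, where `a` is now a large constant. If the lines through a point do not concentrate in one
strip, then there are ten rich cells with distinct rows and columns, and four of them form a
monotone chain by Erdős–Szekeres (`exists_heavy_chain`). Points whose lines concentrate in one strip
are handled by induction on the number of lines (`concentrated_bound`); this closes up because the
strips contribute `a · (M / a)² = M² / a`.
-/

open scoped Classical

/-! ### Points and lines -/

/-- The point `p` lies on the line `y = l.1 * x + l.2`; such lines are encoded as pairs
(slope, intercept). -/
def Inc (p l : ℂ × ℂ) : Prop := p.2 = l.1 * p.1 + l.2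

/-- The lines of `Λ` passing through `p`. -/
noncomputable def thr (Λ : Finset (ℂ × ℂ)) (p : ℂ × ℂ) : Finset (ℂ × ℂ) :=
  Λ.filter fun l => Inc p l

theorem mem_thr {Λ : Finset (ℂ × ℂ)} {p l : ℂ × ℂ} : l ∈ thr Λ p ↔ l ∈ Λ ∧ Inc p l := by
  simp [thr]

theorem Inc.eq_of_slope {p l m : ℂ × ℂ} (h1 : Inc p l) (h2 : Inc p m) (h : l.1 = m.1) : l = m := by
  unfold Inc at *
  refine Prod.ext h ?_
  rw [h1, h] at h2
  exact add_left_cancel h2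

theorem Inc.eq_of_fst {p q l : ℂ × ℂ} (h1 : Inc p l) (h2 : Inc q l) (h : p.1 = q.1) : p = q := by
  unfold Inc at *
  refine Prod.ext h ?_
  rw [h1, h2, h]

theorem Inc.line_unique {p q l m : ℂ × ℂ} (h1 : Inc p l) (h2 : Inc q l) (h3 : Inc p m)
    (h4 : Inc q m) (hpq : p ≠ q) : l = m := by
  apply h1.eq_of_slope h3
  have hne : p.1 - q.1 ≠ 0 := fun h => hpq (h1.eq_of_fst h2 (sub_eq_zero.1 h))
  unfold Inc at *
  apply mul_right_cancel₀ hne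
  linear_combination h3 - h4 - h1 + h2

theorem Inc.point_unique {p q l m : ℂ × ℂ} (h1 : Inc p l) (h2 : Inc q l) (h3 : Inc p m)
    (h4 : Inc q m) (hlm : l ≠ m) : p = q := by
  by_contra h
  exact hlm (h1.line_unique h2 h3 h4 h)

theorem card_thr_inter_le (Λ Λ' : Finset (ℂ × ℂ)) {p q : ℂ × ℂ} (h : p ≠ q) :
    (thr Λ p ∩ thr Λ' q).card ≤ 1 := by
  rw [Finset.card_le_one]
  intro a ha b hb
  simp only [Finset.mem_inter, mem_thr] at ha hb
  exact ha.1.2.line_unique ha.2.2 hb.1.2 hb.2.2 h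

/-- Each new point contributes all but `|Y|` of its lines to the union, since it shares at most
one line with each previous point. -/
theorem card_union_thr (Λ Y : Finset (ℂ × ℂ)) (s : ℕ) (hY : ∀ y ∈ Y, s ≤ (thr Λ y).card) :
    Y.card * s ≤ (Y.biUnion (thr Λ)).card + Y.card * Y.card := by
  induction Y using Finset.induction_on with
  | empty => simp
  | insert a Y ha ih =>
    have ih' := ih fun y hy => hY y (Finset.mem_insert_of_mem hy)
    have hs := hY a (Finset.mem_insert_self _ _)
    rw [Finset.biUnion_insert, Finset.card_insert_of_notMem ha]
    have h1 := Finset.card_union_add_card_inter (thr Λ a) (Y.biUnion (thr Λ))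
    have h2 : (thr Λ a ∩ Y.biUnion (thr Λ)).card ≤ Y.card := by
      rw [Finset.inter_biUnion]
      refine Finset.card_biUnion_le.trans ?_
      calc ∑ y ∈ Y, (thr Λ a ∩ thr Λ y).card ≤ ∑ y ∈ Y, 1 :=
            Finset.sum_le_sum fun y hy => card_thr_inter_le _ _ (by rintro rfl; exact ha hy)
        _ = Y.card := by simp
    nlinarith

/-- If the richness `r` is large compared with `√|Λ|`, there are few rich points. -/
theorem rich_small (Λ X : Finset (ℂ × ℂ)) (r : ℕ) (hr : 2 ≤ r) (hX : ∀ x ∈ X, r ≤ (thr Λ x).card)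
    (hM : 8 * Λ.card < r ^ 2) : X.card * r ≤ 2 * Λ.card := by
  have key : ∀ Y ⊆ X, Y.card * r ≤ Λ.card + Y.card * Y.card := by
    intro Y hY
    refine (card_union_thr Λ Y r fun y hy => hX y (hY hy)).trans ?_
    gcongr
    intro l hl
    obtain ⟨y, -, hy⟩ := Finset.mem_biUnion.1 hl
    exact (mem_thr.1 hy).1
  by_cases h : 2 * X.card ≤ r
  · have := key X subset_rfl
    nlinarith
  · exfalso
    obtain ⟨Y, hY, hc⟩ := Finset.exists_subset_card_eq (s := X) (n := r / 2) (by omega)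
    have := key Y hY
    rw [hc] at this
    obtain ⟨k, hk⟩ : ∃ k, k = r / 2 := ⟨_, rfl⟩
    rw [← hk] at this
    have h3 : r = 2 * k ∨ r = 2 * k + 1 := by omega
    have h4 : 1 ≤ k := by omega
    rcases h3 with h3 | h3 <;> subst h3 <;> nlinarith

/-- Counting pairs of lines through a common point. -/
theorem rich_pairs (Λ X : Finset (ℂ × ℂ)) (r : ℕ) (hr : 2 ≤ r)
    (hX : ∀ x ∈ X, r ≤ (thr Λ x).card) : X.card * r ^ 2 ≤ 2 * Λ.card ^ 2 := by
  have h1 : (X.biUnion fun x => (thr Λ x).offDiag).card ≤ (Λ ×ˢ Λ).card := by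
    apply Finset.card_le_card
    intro l hl
    simp only [Finset.mem_biUnion, Finset.mem_offDiag, mem_thr] at hl
    obtain ⟨x, -, h⟩ := hl
    exact Finset.mem_product.2 ⟨h.1.1, h.2.1.1⟩
  rw [Finset.card_biUnion, Finset.card_product] at h1
  · have h2 : X.card * (r * (r - 1)) ≤ ∑ x ∈ X, (thr Λ x).offDiag.card := by
      rw [← smul_eq_mul]
      apply Finset.card_nsmul_le_sum
      intro x hx
      rw [Finset.offDiag_card, ← Nat.mul_sub_one]
      have := hX x hx
      gcongr
    have h3 : r ^ 2 ≤ 2 * (r * (r - 1)) := by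
      obtain ⟨k, rfl⟩ : ∃ k, r = k + 2 := ⟨r - 2, by omega⟩
      simp only [Nat.add_succ_sub_one]
      nlinarith
    calc X.card * r ^ 2 ≤ X.card * (2 * (r * (r - 1))) := by gcongr
      _ = 2 * (X.card * (r * (r - 1))) := by ring
      _ ≤ 2 * (Λ.card * Λ.card) := Nat.mul_le_mul_left 2 (h2.trans h1)
      _ = _ := by ring
  · intro x hx y hy hxy
    rw [Function.onFun, Finset.disjoint_left]
    intro l h1 h2
    simp only [Finset.mem_offDiag, mem_thr] at h1 h2
    exact h1.2.2 (h1.1.2.line_unique h2.1.2 h1.2.1.2 h2.2.1.2 hxy)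

/-! ### Nearest-neighbour discs -/

theorem octant_aux (a b c d : ℝ) (hb : 0 ≤ b) (hba : b ≤ a) (hd : 0 ≤ d) (hdc : d ≤ c) (ha : 0 < a)
    (hc : 0 < c) (h1 : 2 * (a * c + b * d) ≤ a ^ 2 + b ^ 2)
    (h2 : 2 * (a * c + b * d) ≤ c ^ 2 + d ^ 2) : False := by
  wlog hac : a ≤ c generalizing a b c d
  · exact this c d a b hd hdc hb hba hc ha (by linarith) (by linarith) (by linarith)
  have hbd : 0 ≤ b * d := mul_nonneg hb hd
  have hb2 : b ^ 2 ≤ a ^ 2 := by gcongr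
  have h3 : c ≤ a := by
    by_contra h
    nlinarith
  obtain rfl : a = c := le_antisymm hac h3
  nlinarith

/-- Two nonzero complex numbers in a common octant cannot both be at most as long as their
difference. -/
theorem octant_compl_aux (w w' : ℂ) (hw : w ≠ 0) (hw' : w' ≠ 0)
    (hre : 0 ≤ w.re ↔ 0 ≤ w'.re) (him : 0 ≤ w.im ↔ 0 ≤ w'.im)
    (hab : |w.im| ≤ |w.re| ↔ |w'.im| ≤ |w'.re|)
    (h1 : ‖w‖ ≤ ‖w - w'‖) (h2 : ‖w'‖ ≤ ‖w - w'‖) : False := by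
  have sq : ∀ z : ℂ, ‖z‖ ^ 2 = z.re ^ 2 + z.im ^ 2 := fun z => by
    rw [← Complex.normSq_eq_norm_sq, Complex.normSq_apply]; ring
  have e1 : ‖w‖ ^ 2 ≤ ‖w - w'‖ ^ 2 := by gcongr
  have e2 : ‖w'‖ ^ 2 ≤ ‖w - w'‖ ^ 2 := by gcongr
  simp only [sq, Complex.sub_re, Complex.sub_im] at e1 e2
  have pr : ∀ x y : ℝ, (0 ≤ x ↔ 0 ≤ y) → |x| * |y| = x * y := by
    intro x y h
    rcases le_or_gt 0 x with hx | hx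
    · rw [abs_of_nonneg hx, abs_of_nonneg (h.1 hx)]
    · have hy : y < 0 := by
        by_contra hy
        exact absurd (h.2 (not_lt.1 hy)) (not_le.2 hx)
      rw [abs_of_neg hx, abs_of_neg hy]; ring
  have p1 := pr _ _ hre
  have p2 := pr _ _ him
  have nz : ∀ z : ℂ, z ≠ 0 → z.re = 0 → z.im = 0 → False := fun z hz a b => hz (Complex.ext a b)
  have s1 := sq_abs w.re
  have s2 := sq_abs w.im
  have s3 := sq_abs w'.re
  have s4 := sq_abs w'.im
  by_cases hc : |w.im| ≤ |w.re|
  · have hc' := hab.1 hc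
    refine octant_aux |w.re| |w.im| |w'.re| |w'.im| (abs_nonneg _) hc (abs_nonneg _) hc' ?_ ?_
      (by nlinarith) (by nlinarith)
    · rcases (abs_nonneg w.re).lt_or_eq with h | h
      · exact h
      · exact (nz w hw (abs_eq_zero.1 h.symm)
          (abs_eq_zero.1 (le_antisymm (hc.trans h.symm.le) (abs_nonneg _)))).elim
    · rcases (abs_nonneg w'.re).lt_or_eq with h | h
      · exact h
      · exact (nz w' hw' (abs_eq_zero.1 h.symm)
          (abs_eq_zero.1 (le_antisymm (hc'.trans h.symm.le) (abs_nonneg _)))).elim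
  · have hc' : ¬ |w'.im| ≤ |w'.re| := fun h => hc (hab.2 h)
    rw [not_le] at hc hc'
    exact octant_aux |w.im| |w.re| |w'.im| |w'.re| (abs_nonneg _) hc.le (abs_nonneg _) hc'.le
      ((abs_nonneg _).trans_lt hc) ((abs_nonneg _).trans_lt hc') (by nlinarith) (by nlinarith)

/-- A point of the plane lies in at most `9` of the nearest-neighbour discs of a finite set:
centres of such discs in a common octant around `z` would be too close to each other. -/
theorem overlap (S : Finset ℂ) (z : ℂ) :
    (S.filter fun x => ∀ y ∈ S, y ≠ x → ‖z - x‖ ≤ ‖y - x‖).card ≤ 9 := by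
  set T := S.filter fun x => ∀ y ∈ S, y ≠ x → ‖z - x‖ ≤ ‖y - x‖
  let F : ℂ → Option (Bool × Bool × Bool) := fun x =>
    if x = z then none else some (decide (0 ≤ (x - z).re), decide (0 ≤ (x - z).im),
      decide (|(x - z).im| ≤ |(x - z).re|))
  have hF : Set.InjOn F T := by
    intro x hx y hy hxy
    by_contra hne
    simp only [T, Finset.coe_filter, Set.mem_ofPred_eq] at hx hy
    by_cases hxz : x = z
    · by_cases hyz : y = z
      · exact hne (hxz.trans hyz.symm)
      · simp [F, hxz, hyz] at hxy
    · by_cases hyz : y = z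
      · simp [F, hxz, hyz] at hxy
      · simp only [F, hxz, hyz, if_false, Option.some.injEq, Prod.mk.injEq, decide_eq_decide] at hxy
        refine octant_compl_aux (x - z) (y - z) (sub_ne_zero.2 hxz) (sub_ne_zero.2 hyz)
          hxy.1 hxy.2.1 hxy.2.2 ?_ ?_
        · rw [sub_sub_sub_cancel_right, norm_sub_rev x z, norm_sub_rev x y]
          exact hx.2 y hy.1 (Ne.symm hne)
        · rw [sub_sub_sub_cancel_right, norm_sub_rev y z]
          exact hy.2 x hx.1 hne
  calc T.card = (T.image F).card := (Finset.card_image_of_injOn hF).symm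
    _ ≤ (Finset.univ : Finset (Option (Bool × Bool × Bool))).card :=
      Finset.card_le_card (Finset.subset_univ _)
    _ = 9 := by decide

theorem exists_median {α : Type*} (S : Finset α) (f : α → ℝ) :
    ∃ v : ℝ, S.card ≤ 2 * (S.filter fun a => v ≤ f a).card ∧
      S.card ≤ 2 * (S.filter fun a => f a ≤ v).card := by
  rcases S.eq_empty_or_nonempty with rfl | hS
  · exact ⟨0, by simp⟩
  set V := (S.image f).filter fun v => S.card ≤ 2 * (S.filter fun a => v ≤ f a).card with hV
  have hVne : V.Nonempty := by
    obtain ⟨a, ha, hmin⟩ := S.exists_min_image f hS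
    refine ⟨f a, Finset.mem_filter.2 ⟨Finset.mem_image_of_mem f ha, ?_⟩⟩
    rw [Finset.filter_true_of_mem fun b hb => hmin b hb]
    omega
  obtain ⟨v, hv, hmax⟩ := V.exists_max_image id hVne
  refine ⟨v, (Finset.mem_filter.1 hv).2, ?_⟩
  have hsplit : (S.filter fun a => f a ≤ v).card + (S.filter fun a => ¬ f a ≤ v).card = S.card :=
    Finset.card_filter_add_card_filter_not _
  by_contra hlt
  have hne : (S.filter fun a => ¬ f a ≤ v).Nonempty := by
    rw [← Finset.card_pos]; omega
  obtain ⟨a, ha, hmin⟩ := (S.filter fun a => ¬ f a ≤ v).exists_min_image f hne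
  have ha' := Finset.mem_filter.1 ha
  have : f a ∈ V := by
    refine Finset.mem_filter.2 ⟨Finset.mem_image_of_mem f ha'.1, ?_⟩
    have hsub : (S.filter fun a => ¬ f a ≤ v) ⊆ S.filter fun b => f a ≤ f b := fun b hb =>
      Finset.mem_filter.2 ⟨(Finset.mem_filter.1 hb).1, hmin b hb⟩
    have := Finset.card_le_card hsub
    omega
  exact ha'.2 (hmax _ this)

/-! ### Hits and the class bound -/

/-- The line `μ` hits the line `l`, with a different slope, at a point that is at most as far from
`x ∈ l` (measured in the first coordinate) as every other point of `X` on `l`. -/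
def Hit (X : Finset (ℂ × ℂ)) (x l μ : ℂ × ℂ) : Prop :=
  l.1 ≠ μ.1 ∧ Inc x l ∧ ∃ z, Inc z l ∧ Inc z μ ∧
    ∀ y ∈ X, y ≠ x → Inc y l → ‖z.1 - x.1‖ ≤ ‖y.1 - x.1‖

/-- The lines `l` and `μ` meet in one point, and the points `x` counted here have that point in
their nearest-neighbour disc on `l`. -/
theorem hit_fiber_le (X : Finset (ℂ × ℂ)) (l μ : ℂ × ℂ) :
    (X.filter fun x => Hit X x l μ).card ≤ 9 := by
  rcases (X.filter fun x => Hit X x l μ).eq_empty_or_nonempty with h | ⟨x₀, hx₀⟩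
  · simp [h]
  obtain ⟨hne, -, z, hzl, hzμ, -⟩ := (Finset.mem_filter.1 hx₀).2
  have hne' : l ≠ μ := fun h => hne (by rw [h])
  refine le_trans ?_ (overlap ((X.filter fun x => Inc x l).image Prod.fst) z.1)
  refine Finset.card_le_card_of_injOn Prod.fst ?_ ?_
  · intro x hx
    obtain ⟨hxX, -, hxl, z', hz'l, hz'μ, hz'⟩ := Finset.mem_filter.1 (Finset.mem_coe.1 hx)
    obtain rfl : z' = z := hz'l.point_unique hzl hz'μ hzμ hne'
    rw [Finset.mem_coe, Finset.mem_filter]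
    refine ⟨Finset.mem_image_of_mem _ (Finset.mem_filter.2 ⟨hxX, hxl⟩), ?_⟩
    intro y hy hyx
    obtain ⟨w, hw, rfl⟩ := Finset.mem_image.1 hy
    rw [Finset.mem_filter] at hw
    exact hz' w hw.1 (fun h => hyx (by rw [h])) hw.2
  · intro x hx y hy hxy
    exact (Finset.mem_filter.1 (Finset.mem_coe.1 hx)).2.2.1.eq_of_fst
      (Finset.mem_filter.1 (Finset.mem_coe.1 hy)).2.2.1 hxy

theorem sum_hit_le (X Λ : Finset (ℂ × ℂ)) :
    ∑ x ∈ X, ((Λ ×ˢ Λ).filter fun m => Hit X x m.1 m.2).card ≤ 9 * Λ.card ^ 2 := by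
  have h := Finset.sum_card_bipartiteAbove_eq_sum_card_bipartiteBelow (s := X) (t := Λ ×ˢ Λ)
    (fun x m => Hit X x m.1 m.2)
  unfold Finset.bipartiteAbove Finset.bipartiteBelow at h
  rw [h]
  calc _ ≤ ∑ m ∈ Λ ×ˢ Λ, 9 := Finset.sum_le_sum fun m _ => hit_fiber_le X m.1 m.2
    _ = 9 * Λ.card ^ 2 := by rw [Finset.sum_const, Finset.card_product, smul_eq_mul]; ring

/-- The geometric core: a line `μ` through a point `y'` of `l'` meets `l` no farther from the
common point `x` of `l` and `l'` than `y'`, provided the slopes satisfy the stated inequality. -/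
theorem hit_of_slopes {X : Finset (ℂ × ℂ)} {x y' l l' μ : ℂ × ℂ} (hxl : Inc x l) (hxl' : Inc x l')
    (hyl' : Inc y' l') (hyμ : Inc y' μ) (hne : l' ≠ μ) (hs : ‖l'.1 - μ.1‖ ≤ ‖l.1 - μ.1‖)
    (hρ : ∀ y ∈ X, y ≠ x → Inc y l → ‖y'.1 - x.1‖ ≤ ‖y.1 - x.1‖) : Hit X x l μ := by
  have hlm : l.1 ≠ μ.1 := by
    intro h
    rw [h, sub_self, norm_zero] at hs
    exact hne (hyl'.eq_of_slope hyμ (sub_eq_zero.1 (norm_le_zero_iff.1 hs)))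
  have hlm' : l.1 - μ.1 ≠ 0 := sub_ne_zero.2 hlm
  obtain ⟨z, hz⟩ : ∃ z, z - x.1 = (y'.1 - x.1) * (l'.1 - μ.1) / (l.1 - μ.1) :=
    ⟨x.1 + (y'.1 - x.1) * (l'.1 - μ.1) / (l.1 - μ.1), add_sub_cancel_left _ _⟩
  refine ⟨hlm, hxl, (z, l.1 * z + l.2), rfl, ?_, ?_⟩
  · rw [eq_div_iff hlm'] at hz
    unfold Inc at *
    simp only
    linear_combination hz + hyμ - hyl' - hxl + hxl'
  · intro y hy hyx hyl
    refine le_trans ?_ (hρ y hy hyx hyl)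
    simp only [hz, norm_div, norm_mul]
    rw [div_le_iff₀ (norm_pos_iff.2 hlm')]
    gcongr

/-- Double counting: every line of `B'` through `x` is hit by every line of `D` through one of the
neighbours `y l'`, `l' ∈ C'`, and these neighbours see at least `|C'| * s / 2` lines of `D`. -/
theorem many_hits {X Λ D B' C' : Finset (ℂ × ℂ)} {x : ℂ × ℂ} {y : ℂ × ℂ → ℂ × ℂ} {s : ℕ}
    (hDΛ : D ⊆ Λ) (hBΛ : B' ⊆ Λ) (hxB : ∀ l ∈ B', Inc x l) (hxC : ∀ l ∈ C', Inc x l)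
    (hCD : Disjoint C' D) (hs : ∀ x ∈ X, s ≤ (thr D x).card) (hk : 2 * C'.card ≤ s)
    (hy : ∀ l ∈ C', y l ∈ X ∧ y l ≠ x ∧ Inc (y l) l)
    (hρ : ∀ l ∈ B', ∀ l' ∈ C', ∀ w ∈ X, w ≠ x → Inc w l → ‖(y l').1 - x.1‖ ≤ ‖w.1 - x.1‖)
    (hG : ∀ l ∈ B', ∀ l' ∈ C', ∀ μ ∈ D, ‖l'.1 - μ.1‖ ≤ ‖l.1 - μ.1‖) :
    B'.card * (C'.card * s) ≤ 2 * ((Λ ×ˢ Λ).filter fun m => Hit X x m.1 m.2).card := by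
  have hinj : Set.InjOn y C' := by
    intro l hl m hm hlm
    have h1 := hy l hl
    have h2 := hy m hm
    rw [← hlm] at h2
    exact h1.2.2.line_unique (hxC l hl) h2.2.2 (hxC m hm) h1.2.1
  have hU := card_union_thr D (C'.image y) s (by
    intro w hw
    obtain ⟨l, hl, rfl⟩ := Finset.mem_image.1 hw
    exact hs _ (hy l hl).1)
  rw [Finset.card_image_of_injOn hinj] at hU
  set U := (C'.image y).biUnion (thr D) with hUdef
  have h1 : C'.card * s ≤ 2 * U.card := by nlinarith
  have h2 : (B' ×ˢ U).card ≤ ((Λ ×ˢ Λ).filter fun m => Hit X x m.1 m.2).card := by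
    apply Finset.card_le_card
    rintro ⟨l, μ⟩ hm
    obtain ⟨hl, hμ⟩ := Finset.mem_product.1 hm
    obtain ⟨w, hw, hwμ⟩ := Finset.mem_biUnion.1 hμ
    obtain ⟨l', hl', rfl⟩ := Finset.mem_image.1 hw
    rw [mem_thr] at hwμ
    refine Finset.mem_filter.2 ⟨Finset.mem_product.2 ⟨hBΛ hl, hDΛ hwμ.1⟩, ?_⟩
    exact hit_of_slopes (hxB l hl) (hxC l' hl') (hy l' hl').2.2 hwμ.2
      (fun h => Finset.disjoint_left.1 hCD hl' (h ▸ hwμ.1)) (hG l hl l' hl' μ hwμ.1) (hρ l hl l' hl')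
  rw [Finset.card_product] at h2
  calc B'.card * (C'.card * s) ≤ B'.card * (2 * U.card) := by gcongr
    _ = 2 * (B'.card * U.card) := by ring
    _ ≤ _ := Nat.mul_le_mul_left 2 h2

/-- The line `l` passes through `x` and through no other point of `X`. -/
def Isol (X : Finset (ℂ × ℂ)) (x l : ℂ × ℂ) : Prop :=
  Inc x l ∧ ∀ y ∈ X, y ≠ x → ¬ Inc y l

/-- Each line is isolated for at most one point. -/
theorem sum_isol_le (X Λ : Finset (ℂ × ℂ)) :
    ∑ x ∈ X, (Λ.filter fun l => Isol X x l).card ≤ Λ.card := by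
  have h := Finset.sum_card_bipartiteAbove_eq_sum_card_bipartiteBelow (s := X) (t := Λ)
    (fun x l => Isol X x l)
  unfold Finset.bipartiteAbove Finset.bipartiteBelow at h
  rw [h]
  calc _ ≤ ∑ m ∈ Λ, 1 := Finset.sum_le_sum fun m _ => by
        rw [Finset.card_le_one]
        intro a ha b hb
        rw [Finset.mem_filter] at ha hb
        by_contra hab
        exact ha.2.2 b hb.1 (Ne.symm hab) hb.2.1
    _ = Λ.card := by simp

/-- A point with few isolated lines creates many hits, whichever of the families `B`, `C` has the
larger median distance to the nearest neighbour. -/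
theorem good_point_hits {X Λ A B C D : Finset (ℂ × ℂ)} {h : ℕ} (hAΛ : A ⊆ Λ) (hBΛ : B ⊆ Λ)
    (hCΛ : C ⊆ Λ) (hDΛ : D ⊆ Λ) (hAB : Disjoint A B) (hCD : Disjoint C D)
    (hG1 : ∀ l ∈ B, ∀ l' ∈ C, ∀ μ ∈ D, ‖l'.1 - μ.1‖ ≤ ‖l.1 - μ.1‖)
    (hG2 : ∀ l ∈ B, ∀ l' ∈ C, ∀ μ ∈ A, ‖l.1 - μ.1‖ ≤ ‖l'.1 - μ.1‖)
    (hA : ∀ x ∈ X, 8 * h ≤ (thr A x).card) (hD : ∀ x ∈ X, 8 * h ≤ (thr D x).card)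
    {x : ℂ × ℂ} (hB : 8 * h ≤ (thr B x).card) (hC : 8 * h ≤ (thr C x).card)
    (hgood : (Λ.filter fun l => Isol X x l).card < 4 * h) :
    16 * h ^ 3 ≤ ((Λ ×ˢ Λ).filter fun m => Hit X x m.1 m.2).card := by
  have hex : ∀ l, ∃ y, Inc x l → ¬ Isol X x l → y ∈ X ∧ y ≠ x ∧ Inc y l ∧
      ∀ w ∈ X, w ≠ x → Inc w l → ‖y.1 - x.1‖ ≤ ‖w.1 - x.1‖ := by
    intro l
    by_cases hl : Inc x l ∧ ¬ Isol X x l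
    · have hne : (X.filter fun y => y ≠ x ∧ Inc y l).Nonempty := by
        by_contra hem
        refine hl.2 ⟨hl.1, fun y hy hyx hyl => hem ⟨y, ?_⟩⟩
        exact Finset.mem_filter.2 ⟨hy, hyx, hyl⟩
      obtain ⟨y, hy, hmin⟩ := Finset.exists_min_image _ (fun w => ‖w.1 - x.1‖) hne
      rw [Finset.mem_filter] at hy
      exact ⟨y, fun _ _ => ⟨hy.1, hy.2.1, hy.2.2, fun w hw hwx hwl =>
        hmin w (Finset.mem_filter.2 ⟨hw, hwx, hwl⟩)⟩⟩
    · exact ⟨x, fun h1 h2 => (hl ⟨h1, h2⟩).elim⟩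
  choose y hy using hex
  have hnon : ∀ E ⊆ Λ, 8 * h ≤ (thr E x).card →
      4 * h ≤ ((thr E x).filter fun l => ¬ Isol X x l).card := by
    intro E hE hc
    have h1 : ((thr E x).filter fun l => Isol X x l).card ≤ (Λ.filter fun l => Isol X x l).card :=
      Finset.card_le_card (Finset.filter_subset_filter _ fun l hl => hE (mem_thr.1 hl).1)
    have h2 := Finset.card_filter_add_card_filter_not (s := thr E x) (fun l => Isol X x l)
    omega
  have hB1 := hnon B hBΛ hB
  have hC1 := hnon C hCΛ hC
  set B1 := (thr B x).filter fun l => ¬ Isol X x l with hB1def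
  set C1 := (thr C x).filter fun l => ¬ Isol X x l with hC1def
  have mB : ∀ l ∈ B1, l ∈ B ∧ Inc x l ∧ ¬ Isol X x l := fun l hl => by
    simpa [hB1def, mem_thr, and_assoc] using hl
  have mC : ∀ l ∈ C1, l ∈ C ∧ Inc x l ∧ ¬ Isol X x l := fun l hl => by
    simpa [hC1def, mem_thr, and_assoc] using hl
  -- `step` compares the half `E` of one family with larger distances against the half `F` of the
  -- other family with smaller distances.
  have step : ∀ E F G : Finset (ℂ × ℂ), 2 * h ≤ E.card → 2 * h ≤ F.card → G ⊆ Λ →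
      (∀ l ∈ E, l ∈ Λ ∧ Inc x l ∧ ¬ Isol X x l) → (∀ l ∈ F, Inc x l ∧ ¬ Isol X x l) →
      Disjoint F G → (∀ x ∈ X, 8 * h ≤ (thr G x).card) →
      (∀ l ∈ E, ∀ l' ∈ F, ‖(y l').1 - x.1‖ ≤ ‖(y l).1 - x.1‖) →
      (∀ l ∈ E, ∀ l' ∈ F, ∀ μ ∈ G, ‖l'.1 - μ.1‖ ≤ ‖l.1 - μ.1‖) →
      16 * h ^ 3 ≤ ((Λ ×ˢ Λ).filter fun m => Hit X x m.1 m.2).card := by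
    intro E F G hE hF hGΛ mE mF hFG hG hρ hGs
    obtain ⟨F', hF', hc⟩ := Finset.exists_subset_card_eq hF
    have := many_hits (X := X) (Λ := Λ) (D := G) (B' := E) (C' := F') (x := x) (y := y) (s := 8 * h)
      hGΛ (fun l hl => (mE l hl).1) (fun l hl => (mE l hl).2.1) (fun l hl => (mF l (hF' hl)).1)
      (hFG.mono_left hF') hG (by omega)
      (fun l hl => by
        have := hy l (mF l (hF' hl)).1 (mF l (hF' hl)).2
        exact ⟨this.1, this.2.1, this.2.2.1⟩)
      (fun l hl l' hl' w hw hwx hwl => (hρ l hl l' (hF' hl')).trans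
        ((hy l (mE l hl).2.1 (mE l hl).2.2).2.2.2 w hw hwx hwl))
      (fun l hl l' hl' => hGs l hl l' (hF' hl'))
    rw [hc] at this
    have h3 : 2 * h * (2 * h * (8 * h)) ≤ E.card * (2 * h * (8 * h)) := by gcongr
    nlinarith
  obtain ⟨v, hv1, hv2⟩ := exists_median B1 fun l => ‖(y l).1 - x.1‖
  obtain ⟨v', hv1', hv2'⟩ := exists_median C1 fun l => ‖(y l).1 - x.1‖
  rcases le_total v' v with hvv | hvv
  · refine step (B1.filter fun l => v ≤ ‖(y l).1 - x.1‖) (C1.filter fun l => ‖(y l).1 - x.1‖ ≤ v') D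
      (by omega) (by omega) hDΛ ?_ ?_ ?_ hD ?_ ?_
    · intro l hl
      have := mB l (Finset.filter_subset _ _ hl)
      exact ⟨hBΛ this.1, this.2⟩
    · intro l hl
      exact (mC l (Finset.filter_subset _ _ hl)).2
    · exact hCD.mono_left fun l hl => (mC l (Finset.filter_subset _ _ hl)).1
    · intro l hl l' hl'
      exact ((Finset.mem_filter.1 hl').2.trans hvv).trans (Finset.mem_filter.1 hl).2
    · intro l hl l' hl' μ hμ
      exact hG1 l (mB l (Finset.filter_subset _ _ hl)).1 l' (mC l' (Finset.filter_subset _ _ hl')).1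
        μ hμ
  · refine step (C1.filter fun l => v' ≤ ‖(y l).1 - x.1‖) (B1.filter fun l => ‖(y l).1 - x.1‖ ≤ v) A
      (by omega) (by omega) hAΛ ?_ ?_ ?_ hA ?_ ?_
    · intro l hl
      have := mC l (Finset.filter_subset _ _ hl)
      exact ⟨hCΛ this.1, this.2⟩
    · intro l hl
      exact (mB l (Finset.filter_subset _ _ hl)).2
    · exact hAB.symm.mono_left fun l hl => (mB l (Finset.filter_subset _ _ hl)).1
    · intro l hl l' hl'
      exact ((Finset.mem_filter.1 hl').2.trans hvv).trans (Finset.mem_filter.1 hl).2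
    · intro l hl l' hl' μ hμ
      exact hG2 l' (mB l' (Finset.filter_subset _ _ hl')).1 l (mC l (Finset.filter_subset _ _ hl)).1
        μ hμ

/-- The bound for points having many lines in each of four families whose slopes are in
monotone position. -/
theorem class_bound {X Λ A B C D : Finset (ℂ × ℂ)} {h : ℕ} (hAΛ : A ⊆ Λ) (hBΛ : B ⊆ Λ)
    (hCΛ : C ⊆ Λ) (hDΛ : D ⊆ Λ) (hAB : Disjoint A B) (hCD : Disjoint C D)
    (hG1 : ∀ l ∈ B, ∀ l' ∈ C, ∀ μ ∈ D, ‖l'.1 - μ.1‖ ≤ ‖l.1 - μ.1‖)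
    (hG2 : ∀ l ∈ B, ∀ l' ∈ C, ∀ μ ∈ A, ‖l.1 - μ.1‖ ≤ ‖l'.1 - μ.1‖)
    (hA : ∀ x ∈ X, 8 * h ≤ (thr A x).card) (hB : ∀ x ∈ X, 8 * h ≤ (thr B x).card)
    (hC : ∀ x ∈ X, 8 * h ≤ (thr C x).card) (hD : ∀ x ∈ X, 8 * h ≤ (thr D x).card) :
    X.card * (16 * h ^ 3) ≤ 9 * Λ.card ^ 2 + 4 * h ^ 2 * Λ.card := by
  have key : ∀ x ∈ X, 16 * h ^ 3 ≤ ((Λ ×ˢ Λ).filter fun m => Hit X x m.1 m.2).card +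
      4 * h ^ 2 * (Λ.filter fun l => Isol X x l).card := by
    intro x hx
    rcases lt_or_ge (Λ.filter fun l => Isol X x l).card (4 * h) with hg | hg
    · exact (good_point_hits hAΛ hBΛ hCΛ hDΛ hAB hCD hG1 hG2 hA hD (hB x hx) (hC x hx) hg).trans
        (Nat.le_add_right _ _)
    · refine le_trans ?_ (Nat.le_add_left _ _)
      calc 16 * h ^ 3 = 4 * h ^ 2 * (4 * h) := by ring
        _ ≤ _ := by gcongr
  calc X.card * (16 * h ^ 3) = ∑ x ∈ X, 16 * h ^ 3 := by simp
    _ ≤ _ := Finset.sum_le_sum key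
    _ = ∑ x ∈ X, ((Λ ×ˢ Λ).filter fun m => Hit X x m.1 m.2).card +
        4 * h ^ 2 * ∑ x ∈ X, (Λ.filter fun l => Isol X x l).card := by
      rw [Finset.sum_add_distrib, Finset.mul_sum]
    _ ≤ _ := by
      gcongr
      · exact sum_hit_le X Λ
      · exact sum_isol_le X Λ

/-! ### Strips, monotone chains and transversals -/

/-- An enumeration of `Λ` compatible with the values of `g`, ties broken arbitrarily. -/
theorem exists_rank {α : Type*} (Λ : Finset α) (g : α → ℝ) :
    ∃ k : α → ℕ, Set.InjOn k Λ ∧ (∀ u ∈ Λ, k u < Λ.card) ∧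
      ∀ u ∈ Λ, ∀ v ∈ Λ, k u < k v → g u ≤ g v := by
  induction Λ using Finset.induction_on_max_value g with
  | empty => exact ⟨fun _ => 0, by simp⟩
  | insert a s ha hmax ih =>
    obtain ⟨k, hinj, hlt, hmon⟩ := ih
    have hne : ∀ u ∈ s, u ≠ a := fun u hu h => ha (h ▸ hu)
    refine ⟨Function.update k a s.card, ?_, ?_, ?_⟩
    · intro u hu v hv huv
      simp only [Finset.coe_insert, Set.mem_insert_iff, Finset.mem_coe] at hu hv
      rcases hu with rfl | hu <;> rcases hv with rfl | hv
      · rfl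
      · rw [Function.update_self, Function.update_of_ne (hne v hv)] at huv
        exact absurd (hlt v hv) (by omega)
      · rw [Function.update_self, Function.update_of_ne (hne u hu)] at huv
        exact absurd (hlt u hu) (by omega)
      · rw [Function.update_of_ne (hne u hu), Function.update_of_ne (hne v hv)] at huv
        exact hinj hu hv huv
    · intro u hu
      rw [Finset.card_insert_of_notMem ha]
      rcases Finset.mem_insert.1 hu with rfl | hu
      · simp
      · rw [Function.update_of_ne (hne u hu)]
        have := hlt u hu
        omega
    · intro u hu v hv huv
      rcases Finset.mem_insert.1 hu with rfl | hu' <;> rcases Finset.mem_insert.1 hv with rfl | hv'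
      · exact le_rfl
      · rw [Function.update_self, Function.update_of_ne (hne v hv')] at huv
        exact absurd (hlt v hv') (by omega)
      · exact hmax u hu'
      · rw [Function.update_of_ne (hne u hu'), Function.update_of_ne (hne v hv')] at huv
        exact hmon u hu' v hv' huv

/-- A finite set can be cut into `a` strips of almost equal size along the values of `g`. -/
theorem exists_strips {α : Type*} (Λ : Finset α) (g : α → ℝ) (a : ℕ) (ha : 0 < a) :
    ∃ f : α → ℕ, (∀ u ∈ Λ, f u < a) ∧ (∀ u ∈ Λ, ∀ v ∈ Λ, f u < f v → g u ≤ g v) ∧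
      ∀ i, (Λ.filter fun u => f u = i).card ≤ Λ.card / a + 1 := by
  obtain ⟨k, hinj, hlt, hmon⟩ := exists_rank Λ g
  set b := Λ.card / a + 1 with hb
  have hb0 : 0 < b := Nat.succ_pos _
  refine ⟨fun u => k u / b, ?_, ?_, ?_⟩
  · intro u hu
    rw [Nat.div_lt_iff_lt_mul hb0]
    refine (hlt u hu).trans ?_
    have h1 := Nat.div_add_mod Λ.card a
    have h2 := Nat.mod_lt Λ.card ha
    rw [hb, mul_add]
    omega
  · intro u hu v hv huv
    refine hmon u hu v hv ?_
    by_contra h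
    exact absurd (Nat.div_le_div_right (c := b) (not_lt.1 h)) (not_le.2 huv)
  · intro i
    calc (Λ.filter fun u => k u / b = i).card ≤ (Finset.Ico (i * b) (i * b + b)).card := by
          refine Finset.card_le_card_of_injOn k ?_ (hinj.mono fun u hu =>
            (Finset.mem_filter.1 (Finset.mem_coe.1 hu)).1)
          intro u hu
          obtain ⟨-, h⟩ := Finset.mem_filter.1 (Finset.mem_coe.1 hu)
          have h1 := Nat.div_add_mod (k u) b
          have h2 := Nat.mod_lt (k u) hb0
          rw [h, mul_comm] at h1
          rw [Finset.mem_coe, Finset.mem_Ico]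
          omega
      _ = b := by simp

/-- The case of the Erdős–Szekeres theorem for monotone sequences of length four. -/
theorem exists_chain (T : Finset (ℕ × ℕ)) (h1 : Set.InjOn Prod.fst (T : Set (ℕ × ℕ)))
    (h2 : Set.InjOn Prod.snd (T : Set (ℕ × ℕ))) (hT : 9 < T.card) :
    ∃ a ∈ T, ∃ b ∈ T, ∃ c ∈ T, ∃ d ∈ T, (a.1 < b.1 ∧ b.1 < c.1 ∧ c.1 < d.1) ∧
      ((a.2 < b.2 ∧ b.2 < c.2 ∧ c.2 < d.2) ∨ (b.2 < a.2 ∧ c.2 < b.2 ∧ d.2 < c.2)) := by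
  let R : ℕ × ℕ → ℕ × ℕ → Prop := fun u v => u.1 < v.1 ∧ u.2 < v.2
  let P1 : ℕ × ℕ → Prop := fun v => ∃ u ∈ T, R u v
  let P2 : ℕ × ℕ → Prop := fun v => ∃ u ∈ T, P1 u ∧ R u v
  let P3 : ℕ × ℕ → Prop := fun v => ∃ u ∈ T, P2 u ∧ R u v
  by_cases h3 : ∃ v ∈ T, P3 v
  · obtain ⟨d, hd, c, hc, ⟨b, hb, ⟨a, ha, hab⟩, hbc⟩, hcd⟩ := h3
    exact ⟨a, ha, b, hb, c, hc, d, hd, ⟨hab.1, hbc.1, hcd.1⟩, Or.inl ⟨hab.2, hbc.2, hcd.2⟩⟩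
  push Not at h3
  -- Without an increasing chain of length four, the height colouring has three colours, and each
  -- colour class is an antichain.
  let col : ℕ × ℕ → ℕ := fun v => if P2 v then 2 else if P1 v then 1 else 0
  have hcol : ∀ u ∈ T, ∀ v ∈ T, col u = col v → ¬ R u v := by
    intro u hu v hv huv hR
    have hv1 : P1 v := ⟨u, hu, hR⟩
    have hu2 : ¬ P2 u := fun h => h3 v hv ⟨u, hu, h, hR⟩
    by_cases hu1 : P1 u
    · have hv2 : P2 v := ⟨u, hu, hu1, hR⟩
      simp [col, hu1, hu2, hv2] at huv
    · by_cases hv2 : P2 v <;> simp [col, hu1, hu2, hv1, hv2] at huv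
  obtain ⟨i, -, hi⟩ := Finset.exists_lt_card_fiber_of_mul_lt_card_of_maps_to (s := T)
    (t := Finset.range 3) (f := col) (n := 3) (by
      intro u _
      simp only [col, Finset.mem_range]
      split_ifs <;> omega) (by simpa using hT)
  set K := T.filter fun u => col u = i with hK
  have hKT : ∀ u ∈ K, u ∈ T := fun u hu => (Finset.mem_filter.1 hu).1
  obtain ⟨I, hI, hIc⟩ := Finset.exists_subset_card_eq (s := K.image Prod.fst) (n := 4) (by
    rw [Finset.card_image_of_injOn (h1.mono fun u hu => hKT u hu)]
    omega)
  let e := I.orderEmbOfFin hIc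
  have hpre : ∀ j : Fin 4, ∃ u ∈ K, u.1 = e j := fun j => by
    obtain ⟨u, hu, h⟩ := Finset.mem_image.1 (hI (I.orderEmbOfFin_mem hIc j))
    exact ⟨u, hu, h⟩
  choose p hp hpe using hpre
  have hdec : ∀ j k : Fin 4, j < k → (p j).1 < (p k).1 ∧ (p k).2 < (p j).2 := by
    intro j k hjk
    have hlt : (p j).1 < (p k).1 := by
      rw [hpe, hpe]
      exact e.strictMono hjk
    refine ⟨hlt, ?_⟩
    have hnR := hcol _ (hKT _ (hp j)) _ (hKT _ (hp k))
      ((Finset.mem_filter.1 (hp j)).2.trans (Finset.mem_filter.1 (hp k)).2.symm)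
    have hle : (p k).2 ≤ (p j).2 := by
      by_contra h
      exact hnR ⟨hlt, not_le.1 h⟩
    refine lt_of_le_of_ne hle fun h => ?_
    have := h2 (hKT _ (hp k)) (hKT _ (hp j)) h
    rw [this] at hlt
    exact lt_irrefl _ hlt
  have h01 := hdec 0 1 (by decide)
  have h12 := hdec 1 2 (by decide)
  have h23 := hdec 2 3 (by decide)
  exact ⟨p 0, hKT _ (hp 0), p 1, hKT _ (hp 1), p 2, hKT _ (hp 2), p 3, hKT _ (hp 3),
    ⟨h01.1, h12.1, h23.1⟩, Or.inr ⟨h01.2, h12.2, h23.2⟩⟩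

theorem sum_biUnion_le_sum {ι κ : Type*} [DecidableEq κ] (S : Finset ι) (t : ι → Finset κ)
    (w : κ → ℕ) :
    ∑ c ∈ S.biUnion t, w c ≤ ∑ d ∈ S, ∑ c ∈ t d, w c := by
  induction S using Finset.induction_on with
  | empty => simp
  | insert a S ha ih =>
    rw [Finset.biUnion_insert, Finset.sum_insert ha]
    refine le_trans ?_ (Nat.add_le_add_left ih _)
    rw [← Finset.sum_union_inter]
    exact Nat.le_add_right _ _

/-- If no row or column carries much weight, cells with distinct rows and columns can be chosen
greedily. -/
theorem exists_transversal (H : Finset (ℕ × ℕ)) (w : ℕ × ℕ → ℕ) (R : ℕ)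
    (hcol : ∀ i, ∑ c ∈ H.filter (fun c => c.1 = i), w c ≤ R)
    (hrow : ∀ i, ∑ c ∈ H.filter (fun c => c.2 = i), w c ≤ R) (k : ℕ)
    (hW : 2 * k * R < ∑ c ∈ H, w c) :
    ∃ T ⊆ H, T.card = k + 1 ∧ Set.InjOn Prod.fst (T : Set (ℕ × ℕ)) ∧
      Set.InjOn Prod.snd (T : Set (ℕ × ℕ)) := by
  have aux : ∀ j ≤ k + 1, ∃ T ⊆ H, T.card = j ∧ Set.InjOn Prod.fst (T : Set (ℕ × ℕ)) ∧
      Set.InjOn Prod.snd (T : Set (ℕ × ℕ)) := by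
    intro j
    induction j with
    | zero => exact fun _ => ⟨∅, by simp⟩
    | succ j ih =>
      intro hj
      obtain ⟨T, hTH, hTc, hT1, hT2⟩ := ih (by omega)
      have hex : ∃ c ∈ H, ∀ d ∈ T, c.1 ≠ d.1 ∧ c.2 ≠ d.2 := by
        by_contra hno
        push Not at hno
        have hsub : H ⊆ T.biUnion fun d =>
            (H.filter fun c => c.1 = d.1) ∪ (H.filter fun c => c.2 = d.2) := by
          intro c hc
          obtain ⟨d, hd, hcd⟩ := hno c hc
          refine Finset.mem_biUnion.2 ⟨d, hd, ?_⟩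
          rw [Finset.mem_union, Finset.mem_filter, Finset.mem_filter]
          by_cases h : c.1 = d.1
          · exact Or.inl ⟨hc, h⟩
          · exact Or.inr ⟨hc, hcd h⟩
        have : ∑ c ∈ H, w c ≤ 2 * k * R := by
          calc ∑ c ∈ H, w c ≤ ∑ c ∈ T.biUnion fun d =>
                (H.filter fun c => c.1 = d.1) ∪ (H.filter fun c => c.2 = d.2), w c :=
                Finset.sum_le_sum_of_subset hsub
            _ ≤ ∑ d ∈ T, ∑ c ∈ (H.filter fun c => c.1 = d.1) ∪ (H.filter fun c => c.2 = d.2), w c :=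
                sum_biUnion_le_sum _ _ _
            _ ≤ ∑ d ∈ T, (R + R) := by
                refine Finset.sum_le_sum fun d _ => ?_
                refine le_trans ?_ (add_le_add (hcol d.1) (hrow d.2))
                rw [← Finset.sum_union_inter]
                exact Nat.le_add_right _ _
            _ = 2 * j * R := by rw [Finset.sum_const, hTc, smul_eq_mul]; ring
            _ ≤ 2 * k * R := by gcongr; omega
        omega
      obtain ⟨c, hc, hcT⟩ := hex
      have hcn : c ∉ T := fun h => (hcT c h).1 rfl
      refine ⟨insert c T, Finset.insert_subset hc hTH, by rw [Finset.card_insert_of_notMem hcn, hTc],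
        ?_, ?_⟩
      · rw [Finset.coe_insert, Set.injOn_insert (by simpa using hcn)]
        refine ⟨hT1, ?_⟩
        rintro ⟨d, hd, hdc⟩
        exact (hcT d hd).1 hdc.symm
      · rw [Finset.coe_insert, Set.injOn_insert (by simpa using hcn)]
        refine ⟨hT2, ?_⟩
        rintro ⟨d, hd, hdc⟩
        exact (hcT d hd).2 hdc.symm
  exact aux (k + 1) le_rfl

/-! ### Points with spread-out slopes -/

theorem thr_filter (Λ : Finset (ℂ × ℂ)) (p : ℂ × ℂ → Prop) [DecidablePred p]
    (x : ℂ × ℂ) :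
    thr (Λ.filter p) x = (thr Λ x).filter p := by
  unfold thr
  rw [Finset.filter_comm]

theorem norm_sub_le_of_between {u v w : ℂ}
    (hre : u.re ≤ v.re ∧ v.re ≤ w.re ∨ w.re ≤ v.re ∧ v.re ≤ u.re)
    (him : u.im ≤ v.im ∧ v.im ≤ w.im ∨ w.im ≤ v.im ∧ v.im ≤ u.im) : ‖v - w‖ ≤ ‖u - w‖ := by
  have sq : ∀ z : ℂ, ‖z‖ ^ 2 = z.re ^ 2 + z.im ^ 2 := fun z => by
    rw [← Complex.normSq_eq_norm_sq, Complex.normSq_apply]; ring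
  refine (pow_le_pow_iff_left₀ (norm_nonneg _) (norm_nonneg _) two_ne_zero).1 ?_
  rw [sq, sq]
  simp only [Complex.sub_re, Complex.sub_im]
  have h1 : (v.re - w.re) ^ 2 ≤ (u.re - w.re) ^ 2 := by
    rcases hre with h | h <;> nlinarith
  have h2 : (v.im - w.im) ^ 2 ≤ (u.im - w.im) ^ 2 := by
    rcases him with h | h <;> nlinarith
  linarith

/-- Four cells whose first coordinates increase and whose second coordinates
are strictly monotone. -/
def Chain (q : (ℕ × ℕ) × (ℕ × ℕ) × (ℕ × ℕ) × (ℕ × ℕ)) : Prop :=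
  (q.1.1 < q.2.1.1 ∧ q.2.1.1 < q.2.2.1.1 ∧ q.2.2.1.1 < q.2.2.2.1) ∧
    ((q.1.2 < q.2.1.2 ∧ q.2.1.2 < q.2.2.1.2 ∧ q.2.2.1.2 < q.2.2.2.2) ∨
      (q.2.1.2 < q.1.2 ∧ q.2.2.1.2 < q.2.1.2 ∧ q.2.2.2.2 < q.2.2.1.2))

/-- The lines in light cells number at most `a * a * s`, so the remaining weight exceeds `18 * R`, and
ten heavy cells with distinct rows and columns can be chosen; four of them form a chain. -/
theorem exists_heavy_chain (S : Finset (ℂ × ℂ)) (f g : ℂ × ℂ → ℕ) (a s R : ℕ)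
    (hf : ∀ u ∈ S, f u < a) (hg : ∀ u ∈ S, g u < a)
    (hV : ∀ i, (S.filter fun l => f l = i).card ≤ R)
    (hH : ∀ i, (S.filter fun l => g l = i).card ≤ R) (hbig : a * a * s + 18 * R < S.card) :
    ∃ A ∈ Finset.range a ×ˢ Finset.range a, ∃ B ∈ Finset.range a ×ˢ Finset.range a,
      ∃ C ∈ Finset.range a ×ˢ Finset.range a, ∃ D ∈ Finset.range a ×ˢ Finset.range a,
      Chain (A, B, C, D) ∧
      s ≤ (S.filter fun l => (f l, g l) = A).card ∧ s ≤ (S.filter fun l => (f l, g l) = B).card ∧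
      s ≤ (S.filter fun l => (f l, g l) = C).card ∧
      s ≤ (S.filter fun l => (f l, g l) = D).card := by
  set G := Finset.range a ×ˢ Finset.range a with hG
  let w : ℕ × ℕ → ℕ := fun c => (S.filter fun l => (f l, g l) = c).card
  have htot : ∑ c ∈ G, w c = S.card := by
    symm
    apply Finset.card_eq_sum_card_fiberwise
    intro l hl
    simp only [hG, Finset.coe_product, Set.mem_prod, Finset.mem_coe, Finset.mem_range]
    exact ⟨hf l hl, hg l hl⟩
  set H := G.filter fun c => s ≤ w c with hHdef
  have hlight : ∑ c ∈ G.filter (fun c => ¬ s ≤ w c), w c ≤ a * a * s := by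
    calc ∑ c ∈ G.filter (fun c => ¬ s ≤ w c), w c ≤ ∑ c ∈ G.filter (fun c => ¬ s ≤ w c), s :=
          Finset.sum_le_sum fun c hc => (not_le.1 (Finset.mem_filter.1 hc).2).le
      _ = (G.filter fun c => ¬ s ≤ w c).card * s := by simp
      _ ≤ G.card * s := by gcongr; exact Finset.filter_subset _ _
      _ = a * a * s := by simp [hG]
  have hsplit : ∑ c ∈ H, w c + ∑ c ∈ G.filter (fun c => ¬ s ≤ w c), w c = ∑ c ∈ G, w c :=
    Finset.sum_filter_add_sum_filter_not _ _ _
  obtain ⟨T, hTH, hTc, hT1, hT2⟩ := exists_transversal H w R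
    (by
      intro i
      refine le_trans ?_ (hV i)
      rw [Finset.sum_card_fiberwise_eq_card_filter]
      apply Finset.card_le_card
      intro l hl
      simp only [Finset.mem_filter] at hl ⊢
      exact ⟨hl.1, hl.2.2⟩)
    (by
      intro i
      refine le_trans ?_ (hH i)
      rw [Finset.sum_card_fiberwise_eq_card_filter]
      apply Finset.card_le_card
      intro l hl
      simp only [Finset.mem_filter] at hl ⊢
      exact ⟨hl.1, hl.2.2⟩) 9 (by omega)
  obtain ⟨A, hA, B, hB, C, hC, D, hD, hch⟩ := exists_chain T hT1 hT2 (by omega)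
  have m : ∀ c ∈ T, c ∈ G ∧ s ≤ w c := fun c hc => Finset.mem_filter.1 (hTH hc)
  exact ⟨A, (m A hA).1, B, (m B hB).1, C, (m C hC).1, D, (m D hD).1, hch,
    (m A hA).2, (m B hB).2, (m C hC).2, (m D hD).2⟩

/-- The bound for points whose lines do not concentrate in a vertical (`f`) or horizontal (`g`)
strip of slopes. -/
theorem spread_bound (Λ X : Finset (ℂ × ℂ)) (f g : ℂ × ℂ → ℕ) (a h R : ℕ)
    (hf : ∀ u ∈ Λ, f u < a) (hg : ∀ u ∈ Λ, g u < a)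
    (hfm : ∀ u ∈ Λ, ∀ v ∈ Λ, f u < f v → u.1.re ≤ v.1.re)
    (hgm : ∀ u ∈ Λ, ∀ v ∈ Λ, g u < g v → u.1.im ≤ v.1.im)
    (hV : ∀ x ∈ X, ∀ i, ((thr Λ x).filter fun l => f l = i).card ≤ R)
    (hH : ∀ x ∈ X, ∀ i, ((thr Λ x).filter fun l => g l = i).card ≤ R)
    (hbig : ∀ x ∈ X, a * a * (8 * h) + 18 * R < (thr Λ x).card) :
    X.card * (16 * h ^ 3) ≤ a ^ 8 * (9 * Λ.card ^ 2 + 4 * h ^ 2 * Λ.card) := by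
  set G := Finset.range a ×ˢ Finset.range a with hG
  let E : ℕ × ℕ → Finset (ℂ × ℂ) := fun c => Λ.filter fun l => (f l, g l) = c
  have mE : ∀ c l, l ∈ E c → l ∈ Λ ∧ f l = c.1 ∧ g l = c.2 := by
    intro c l hl
    obtain ⟨h1, rfl⟩ := Finset.mem_filter.1 hl
    exact ⟨h1, rfl, rfl⟩
  let Xc : (ℕ × ℕ) × (ℕ × ℕ) × (ℕ × ℕ) × (ℕ × ℕ) → Finset (ℂ × ℂ) := fun q =>
    X.filter fun x => Chain q ∧ 8 * h ≤ (thr (E q.1) x).card ∧ 8 * h ≤ (thr (E q.2.1) x).card ∧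
      8 * h ≤ (thr (E q.2.2.1) x).card ∧ 8 * h ≤ (thr (E q.2.2.2) x).card
  have hcover : X ⊆ (G ×ˢ G ×ˢ G ×ˢ G).biUnion Xc := by
    intro x hx
    obtain ⟨A, hA, B, hB, C, hC, D, hD, hch, h1, h2, h3, h4⟩ :=
      exists_heavy_chain (thr Λ x) f g a (8 * h) R (fun u hu => hf u (mem_thr.1 hu).1)
        (fun u hu => hg u (mem_thr.1 hu).1) (hV x hx) (hH x hx) (hbig x hx)
    refine Finset.mem_biUnion.2 ⟨(A, B, C, D), ?_, ?_⟩
    · simp only [Finset.mem_product] at hA hB hC hD ⊢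
      exact ⟨by simpa [hG] using hA, by simpa [hG] using hB, by simpa [hG] using hC,
        by simpa [hG] using hD⟩
    · refine Finset.mem_filter.2 ⟨hx, hch, ?_, ?_, ?_, ?_⟩ <;> simp only [E, thr_filter] <;>
        assumption
  have hone : ∀ q, (Xc q).card * (16 * h ^ 3) ≤ 9 * Λ.card ^ 2 + 4 * h ^ 2 * Λ.card := by
    intro q
    by_cases hq : Chain q
    swap
    · have : Xc q = ∅ := Finset.filter_false_of_mem fun x _ hx => hq hx.1
      simp [this]
    obtain ⟨A, B, C, D⟩ := q
    have hm : ∀ x ∈ Xc (A, B, C, D), 8 * h ≤ (thr (E A) x).card ∧ 8 * h ≤ (thr (E B) x).card ∧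
      8 * h ≤ (thr (E C) x).card ∧ 8 * h ≤ (thr (E D) x).card := fun x hx =>
        (Finset.mem_filter.1 hx).2.2
    have hsub : ∀ c, E c ⊆ Λ := fun c => Finset.filter_subset _ _
    obtain ⟨⟨a1, a2, a3⟩, hq2⟩ := hq
    simp only at a1 a2 a3 hq2
    have hdis : ∀ c d : ℕ × ℕ, c.1 < d.1 → Disjoint (E c) (E d) := by
      intro c d hcd
      rw [Finset.disjoint_left]
      intro l h1 h2
      have e1 := (mE c l h1).2.1
      have e2 := (mE d l h2).2.1
      omega
    have hre : ∀ c d : ℕ × ℕ, c.1 < d.1 → ∀ l ∈ E c, ∀ m ∈ E d, l.1.re ≤ m.1.re := by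
      intro c d hcd l hl m hm
      have e1 := mE c l hl
      have e2 := mE d m hm
      exact hfm l e1.1 m e2.1 (by rw [e1.2.1, e2.2.1]; exact hcd)
    have him : ∀ c d : ℕ × ℕ, c.2 < d.2 → ∀ l ∈ E c, ∀ m ∈ E d, l.1.im ≤ m.1.im := by
      intro c d hcd l hl m hm
      have e1 := mE c l hl
      have e2 := mE d m hm
      exact hgm l e1.1 m e2.1 (by rw [e1.2.2, e2.2.2]; exact hcd)
    refine class_bound (hsub A) (hsub B) (hsub C) (hsub D) (hdis A B a1) (hdis C D a3) ?_ ?_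
      (fun x hx => (hm x hx).1) (fun x hx => (hm x hx).2.1) (fun x hx => (hm x hx).2.2.1)
      (fun x hx => (hm x hx).2.2.2)
    · intro l hl l' hl' μ hμ
      refine norm_sub_le_of_between (Or.inl ⟨hre B C a2 l hl l' hl', hre C D a3 l' hl' μ hμ⟩) ?_
      rcases hq2 with ⟨b1, b2, b3⟩ | ⟨b1, b2, b3⟩
      · exact Or.inl ⟨him B C b2 l hl l' hl', him C D b3 l' hl' μ hμ⟩
      · exact Or.inr ⟨him D C b3 μ hμ l' hl', him C B b2 l' hl' l hl⟩
    · intro l hl l' hl' μ hμ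
      refine norm_sub_le_of_between (Or.inr ⟨hre A B a1 μ hμ l hl, hre B C a2 l hl l' hl'⟩) ?_
      rcases hq2 with ⟨b1, b2, b3⟩ | ⟨b1, b2, b3⟩
      · exact Or.inr ⟨him A B b1 μ hμ l hl, him B C b2 l hl l' hl'⟩
      · exact Or.inl ⟨him C B b2 l' hl' l hl, him B A b1 l hl μ hμ⟩
  calc X.card * (16 * h ^ 3) ≤ (∑ q ∈ G ×ˢ G ×ˢ G ×ˢ G, (Xc q).card) * (16 * h ^ 3) := by
        gcongr
        exact (Finset.card_le_card hcover).trans Finset.card_biUnion_le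
    _ = ∑ q ∈ G ×ˢ G ×ˢ G ×ˢ G, (Xc q).card * (16 * h ^ 3) := Finset.sum_mul _ _ _
    _ ≤ ∑ q ∈ G ×ˢ G ×ˢ G ×ˢ G, (9 * Λ.card ^ 2 + 4 * h ^ 2 * Λ.card) :=
        Finset.sum_le_sum fun q _ => hone q
    _ = a ^ 8 * (9 * Λ.card ^ 2 + 4 * h ^ 2 * Λ.card) := by
        rw [Finset.sum_const, smul_eq_mul]
        simp only [hG, Finset.card_product, Finset.card_range]
        ring

/-! ### The complex Szemerédi–Trotter theorem -/

/-- Points with more than `R` lines in one strip are controlled by a bound for each strip. -/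
theorem concentrated_bound (Λ X : Finset (ℂ × ℂ)) (f : ℂ × ℂ → ℕ) (a R K m : ℕ)
    (hf : ∀ u ∈ Λ, f u < a) (hm : ∀ i, (Λ.filter fun u => f u = i).card ≤ m)
    (ih : ∀ i, ∀ Y : Finset (ℂ × ℂ), (∀ y ∈ Y, R ≤ (thr (Λ.filter fun u => f u = i) y).card) →
      Y.card * R ^ 3 ≤ K * (Λ.filter fun u => f u = i).card ^ 2 +
        2 * (Λ.filter fun u => f u = i).card * R ^ 2) :
    (X.filter fun x => ∃ i, R < ((thr Λ x).filter fun l => f l = i).card).card * R ^ 3 ≤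
      a * (K * m ^ 2 + 2 * m * R ^ 2) := by
  let Y : ℕ → Finset (ℂ × ℂ) := fun i =>
    X.filter fun x => R < ((thr Λ x).filter fun l => f l = i).card
  have hcover : (X.filter fun x => ∃ i, R < ((thr Λ x).filter fun l => f l = i).card) ⊆
      (Finset.range a).biUnion Y := by
    intro x hx
    obtain ⟨hxX, i, hi⟩ := Finset.mem_filter.1 hx
    refine Finset.mem_biUnion.2 ⟨i, ?_, Finset.mem_filter.2 ⟨hxX, hi⟩⟩
    obtain ⟨l, hl⟩ := Finset.card_pos.1 (lt_of_le_of_lt (Nat.zero_le _) hi)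
    obtain ⟨hl1, rfl⟩ := Finset.mem_filter.1 hl
    exact Finset.mem_range.2 (hf l (mem_thr.1 hl1).1)
  have hone : ∀ i, (Y i).card * R ^ 3 ≤ K * m ^ 2 + 2 * m * R ^ 2 := by
    intro i
    refine (ih i (Y i) ?_).trans ?_
    · intro y hy
      rw [thr_filter]
      exact (Finset.mem_filter.1 hy).2.le
    · have := hm i
      gcongr
  calc _ ≤ (∑ i ∈ Finset.range a, (Y i).card) * R ^ 3 := by
        gcongr
        exact (Finset.card_le_card hcover).trans Finset.card_biUnion_le
    _ = ∑ i ∈ Finset.range a, (Y i).card * R ^ 3 := Finset.sum_mul _ _ _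
    _ ≤ ∑ i ∈ Finset.range a, (K * m ^ 2 + 2 * m * R ^ 2) := Finset.sum_le_sum fun i _ => hone i
    _ = _ := by simp

/-- The concentrated points cost only an eighth of the constant `K`, since `a` is large. -/
theorem conc_arith (a r R M m K Z : ℝ) (ha : 32 * 80 ^ 3 ≤ a) (hR : 0 ≤ R) (hrR : r ≤ 80 * R)
    (hRr : 40 * R ≤ r) (hM : r ^ 2 ≤ 8 * M) (hm0 : 0 ≤ m) (hm : a * m ≤ 2 * M) (hK : 0 ≤ K)
    (hM0 : 0 ≤ M) (hZ0 : 0 ≤ Z)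
    (hZ : Z * R ^ 3 ≤ a * (K * m ^ 2 + 2 * m * R ^ 2)) :
    Z * r ^ 3 ≤ K * M ^ 2 / 8 + 10240 * M ^ 2 := by
  have ha0 : 0 < a := lt_of_lt_of_le (by norm_num) ha
  have hr0 : 0 ≤ r := by linarith
  have h1 : r ^ 3 ≤ 80 ^ 3 * R ^ 3 := by
    calc r ^ 3 ≤ (80 * R) ^ 3 := by gcongr
      _ = _ := by ring
  have h2 : Z * r ^ 3 * a ≤ 80 ^ 3 * (4 * K * M ^ 2 + 4 * a * M * R ^ 2) := by
    calc Z * r ^ 3 * a ≤ Z * (80 ^ 3 * R ^ 3) * a := by gcongr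
      _ = 80 ^ 3 * a * (Z * R ^ 3) := by ring
      _ ≤ 80 ^ 3 * a * (a * (K * m ^ 2 + 2 * m * R ^ 2)) := by gcongr
      _ = 80 ^ 3 * (K * (a * m) ^ 2 + 2 * a * (a * m) * R ^ 2) := by ring
      _ ≤ 80 ^ 3 * (K * (2 * M) ^ 2 + 2 * a * (2 * M) * R ^ 2) := by gcongr
      _ = _ := by ring
  have h3 : R ^ 2 ≤ M / 200 := by nlinarith
  have h4 : 80 ^ 3 * (4 * K * M ^ 2) ≤ a * (K * M ^ 2 / 8) := by
    calc 80 ^ 3 * (4 * K * M ^ 2) = 32 * 80 ^ 3 * (K * M ^ 2 / 8) := by ring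
      _ ≤ _ := by gcongr
  have h5 : 80 ^ 3 * (4 * a * M * R ^ 2) ≤ a * (10240 * M ^ 2) := by
    calc 80 ^ 3 * (4 * a * M * R ^ 2) ≤ 80 ^ 3 * (4 * a * M * (M / 200)) := by gcongr
      _ = _ := by ring
  have h6 : Z * r ^ 3 * a ≤ (K * M ^ 2 / 8 + 10240 * M ^ 2) * a := by linarith
  exact le_of_mul_le_mul_right h6 ha0

theorem spread_arith (a r h M Z : ℝ) (ha : 1 ≤ a) (hh : 0 ≤ h) (hr : r ≤ 32 * a ^ 2 * h)
    (hr' : 16 * a ^ 2 * h ≤ r) (hM : r ^ 2 ≤ 8 * M) (hM0 : 0 ≤ M) (hZ0 : 0 ≤ Z)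
    (hZ : Z * (16 * h ^ 3) ≤ a ^ 8 * (9 * M ^ 2 + 4 * h ^ 2 * M)) :
    Z * r ^ 3 ≤ 83968 * a ^ 14 * M ^ 2 := by
  have ha2 : 1 ≤ a ^ 2 := one_le_pow₀ ha
  have hhr : h ≤ r := by nlinarith
  have hr0 : 0 ≤ r := hh.trans hhr
  have h1 : h ^ 2 ≤ 8 * M := le_trans (by gcongr) hM
  calc Z * r ^ 3 ≤ Z * (32 * a ^ 2 * h) ^ 3 := by gcongr
    _ = 2048 * a ^ 6 * (Z * (16 * h ^ 3)) := by ring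
    _ ≤ 2048 * a ^ 6 * (a ^ 8 * (9 * M ^ 2 + 4 * h ^ 2 * M)) := by gcongr
    _ ≤ 2048 * a ^ 6 * (a ^ 8 * (9 * M ^ 2 + 4 * (8 * M) * M)) := by gcongr
    _ = _ := by ring

/-- The complex Szemerédi–Trotter theorem in rich-point form, by strong induction on the number of
lines. The parameter `a` is the number of strips into which the slopes are cut. -/
theorem szemeredi_trotter_nat (a : ℕ) (ha : 32 * 80 ^ 3 ≤ a) (M : ℕ) :
    ∀ Λ : Finset (ℂ × ℂ), Λ.card = M → ∀ r : ℕ, 2 ≤ r → ∀ X : Finset (ℂ × ℂ),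
      (∀ x ∈ X, r ≤ (thr Λ x).card) →
      X.card * r ^ 3 ≤ 10 ^ 6 * a ^ 14 * M ^ 2 + 2 * M * r ^ 2 := by
  induction M using Nat.strong_induction_on with
  | _ M IH =>
  intro Λ hΛ r hr X hX
  have ha0 : 0 < a := lt_of_lt_of_le (by norm_num) ha
  rcases lt_or_ge (8 * M) (r ^ 2) with hsm | hlarge
  · have := rich_small Λ X r hr hX (by rw [hΛ]; exact hsm)
    rw [hΛ] at this
    calc X.card * r ^ 3 = X.card * r * r ^ 2 := by ring
      _ ≤ 2 * M * r ^ 2 := by gcongr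
      _ ≤ _ := Nat.le_add_left _ _
  refine le_trans ?_ (Nat.le_add_right _ _)
  rcases lt_or_ge r (16 * a ^ 2) with hr0 | hr0
  · have := rich_pairs Λ X r hr hX
    rw [hΛ] at this
    calc X.card * r ^ 3 = X.card * r ^ 2 * r := by ring
      _ ≤ 2 * M ^ 2 * (16 * a ^ 2) := by gcongr
      _ = 32 * a ^ 2 * M ^ 2 := by ring
      _ ≤ 10 ^ 6 * a ^ 14 * M ^ 2 := by
        gcongr
        · norm_num
        · omega
  obtain ⟨f, hf, hfm, hfc⟩ := exists_strips Λ (fun l => l.1.re) a ha0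
  obtain ⟨g, hg, hgm, hgc⟩ := exists_strips Λ (fun l => l.1.im) a ha0
  rw [hΛ] at hfc hgc
  obtain ⟨m, hm⟩ : ∃ m, m = M / a + 1 := ⟨_, rfl⟩
  rw [← hm] at hfc hgc
  have har : a ≤ r := by nlinarith
  have hMr : 2 * r ≤ M := by nlinarith
  have hmM : m < M := by
    have : M / a ≤ M / 2 := Nat.div_le_div_left (by omega) (by norm_num)
    omega
  have ham : a * m ≤ 2 * M := by
    have := Nat.mul_div_le M a
    rw [hm, mul_add]
    omega
  obtain ⟨R, hR⟩ : ∃ R, R = r / 40 := ⟨_, rfl⟩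
  have hR2 : 2 ≤ R := by omega
  obtain ⟨h, hh⟩ : ∃ h, h = r / (16 * a ^ 2) := ⟨_, rfl⟩
  have hh1 : 16 * a ^ 2 * h ≤ r := by rw [hh]; exact Nat.mul_div_le _ _
  have hh2 : r ≤ 32 * a ^ 2 * h := by
    have h1 := Nat.div_add_mod r (16 * a ^ 2)
    have h2 := Nat.mod_lt r (show 0 < 16 * a ^ 2 by positivity)
    have h3 : 1 ≤ h := by rw [hh, Nat.one_le_div_iff (by positivity)]; exact hr0
    rw [← hh] at h1
    nlinarith
  set K := 10 ^ 6 * a ^ 14 with hK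
  set X1 := X.filter fun x => ∃ i, R < ((thr Λ x).filter fun l => f l = i).card with hX1
  set X2 := X.filter fun x => ∃ i, R < ((thr Λ x).filter fun l => g l = i).card with hX2
  set X3 := X \ (X1 ∪ X2) with hX3
  have hcard : X.card ≤ X1.card + X2.card + X3.card := by
    calc X.card ≤ ((X1 ∪ X2) ∪ X3).card := by
          apply Finset.card_le_card
          intro x hx
          by_cases h : x ∈ X1 ∪ X2
          · exact Finset.mem_union_left _ h
          · exact Finset.mem_union_right _ (Finset.mem_sdiff.2 ⟨hx, h⟩)
      _ ≤ (X1 ∪ X2).card + X3.card := Finset.card_union_le _ _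
      _ ≤ _ := by gcongr; exact Finset.card_union_le _ _
  have b1 := concentrated_bound Λ X f a R K m hf hfc fun i Y hY =>
    IH _ (lt_of_le_of_lt (hfc i) hmM) _ rfl R hR2 Y hY
  have b2 := concentrated_bound Λ X g a R K m hg hgc fun i Y hY =>
    IH _ (lt_of_le_of_lt (hgc i) hmM) _ rfl R hR2 Y hY
  have m3 : ∀ x ∈ X3, x ∈ X ∧ x ∉ X1 ∧ x ∉ X2 := fun x hx => by
    simpa [hX3] using hx
  have b3 := spread_bound Λ X3 f g a h R hf hg hfm hgm
    (by
      intro x hx i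
      by_contra hcon
      exact (m3 x hx).2.1 (Finset.mem_filter.2 ⟨(m3 x hx).1, i, not_le.1 hcon⟩))
    (by
      intro x hx i
      by_contra hcon
      exact (m3 x hx).2.2 (Finset.mem_filter.2 ⟨(m3 x hx).1, i, not_le.1 hcon⟩))
    (by
      intro x hx
      refine lt_of_lt_of_le ?_ (hX x (m3 x hx).1)
      have e1 : a * a * (8 * h) * 2 = 16 * a ^ 2 * h := by ring
      omega)
  rw [hΛ] at b3
  have hlargeR : (r : ℝ) ^ 2 ≤ 8 * M := by exact_mod_cast hlarge
  have haR : (32 * 80 ^ 3 : ℝ) ≤ a := by exact_mod_cast ha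
  have c1 := conc_arith a r R M m K X1.card haR (by positivity)
    (by exact_mod_cast (show r ≤ 80 * R by omega)) (by exact_mod_cast (show 40 * R ≤ r by omega))
    hlargeR (by positivity) (by exact_mod_cast ham) (by positivity) (by positivity) (by positivity)
    (by exact_mod_cast b1)
  have c2 := conc_arith a r R M m K X2.card haR (by positivity)
    (by exact_mod_cast (show r ≤ 80 * R by omega)) (by exact_mod_cast (show 40 * R ≤ r by omega))
    hlargeR (by positivity) (by exact_mod_cast ham) (by positivity) (by positivity) (by positivity)
    (by exact_mod_cast b2)
  have c3 := spread_arith a r h M X3.card (le_trans (by norm_num) haR) (by positivity)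
    (by exact_mod_cast hh2) (by exact_mod_cast hh1) hlargeR (by positivity) (by positivity)
    (by exact_mod_cast b3)
  have hcardR : (X.card : ℝ) ≤ X1.card + X2.card + X3.card := by exact_mod_cast hcard
  have hKR : (K : ℝ) = 10 ^ 6 * (a : ℝ) ^ 14 := by rw [hK]; push_cast; ring
  have ha14 : (1 : ℝ) ≤ (a : ℝ) ^ 14 := one_le_pow₀ (le_trans (by norm_num) haR)
  have final : (X.card : ℝ) * r ^ 3 ≤ K * M ^ 2 := by
    calc (X.card : ℝ) * r ^ 3 ≤ (X1.card + X2.card + X3.card) * r ^ 3 := by gcongr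
      _ ≤ K * M ^ 2 / 4 + 20480 * M ^ 2 + 83968 * (a : ℝ) ^ 14 * M ^ 2 := by linarith
      _ = (K / 4 + 20480 + 83968 * (a : ℝ) ^ 14) * M ^ 2 := by ring
      _ ≤ K * M ^ 2 := by
        gcongr
        rw [hKR]
        linarith
  exact_mod_cast final

/-- The complex Szemerédi–Trotter theorem for points on at least `ρ` lines, `ρ ≥ 2` real. -/
theorem szemeredi_trotter : ∃ C : ℝ, 1 ≤ C ∧ ∀ (Λ X : Finset (ℂ × ℂ)) (ρ : ℝ), 2 ≤ ρ →
    (∀ x ∈ X, ρ ≤ ((thr Λ x).card : ℝ)) →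
    (X.card : ℝ) * ρ ^ 3 ≤ C * ((Λ.card : ℝ) ^ 2 + Λ.card * ρ ^ 2) := by
  obtain ⟨a, ha⟩ : ∃ a : ℕ, 32 * 80 ^ 3 ≤ a := ⟨_, le_rfl⟩
  have haR : (32 * 80 ^ 3 : ℝ) ≤ a := by exact_mod_cast ha
  have ha14 : (1 : ℝ) ≤ (a : ℝ) ^ 14 := one_le_pow₀ (le_trans (by norm_num) haR)
  refine ⟨10 ^ 6 * (a : ℝ) ^ 14, by linarith, ?_⟩
  intro Λ X ρ hρ hX
  set r := ⌈ρ⌉₊ with hr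
  have hrρ : ρ ≤ r := Nat.le_ceil ρ
  have hrρ' : (r : ℝ) ≤ 2 * ρ := by
    have := Nat.ceil_lt_add_one (show 0 ≤ ρ by linarith)
    linarith
  have h2 : 2 ≤ r := by exact_mod_cast hρ.trans hrρ
  have h := szemeredi_trotter_nat a ha Λ.card Λ rfl r h2 X fun x hx => Nat.ceil_le.2 (hX x hx)
  have hR : (X.card : ℝ) * r ^ 3 ≤ 10 ^ 6 * (a : ℝ) ^ 14 * Λ.card ^ 2 + 2 * Λ.card * r ^ 2 := by
    exact_mod_cast h
  calc (X.card : ℝ) * ρ ^ 3 ≤ X.card * r ^ 3 := by gcongr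
    _ ≤ _ := hR
    _ ≤ 10 ^ 6 * (a : ℝ) ^ 14 * Λ.card ^ 2 + 2 * Λ.card * (2 * ρ) ^ 2 := by gcongr
    _ = 10 ^ 6 * (a : ℝ) ^ 14 * Λ.card ^ 2 + 8 * (Λ.card * ρ ^ 2) := by ring
    _ ≤ 10 ^ 6 * (a : ℝ) ^ 14 * Λ.card ^ 2 + 10 ^ 6 * (a : ℝ) ^ 14 * (Λ.card * ρ ^ 2) := by
      gcongr
      linarith
    _ = _ := by ring

/-! ### Duality and the dyadic decomposition -/

/-- The dual form: few lines contain at least `k ≥ 2` points of `Q`. The point `(x, y)` lies on the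
line `(s, b)` exactly when the point `(s, b)` lies on the line `(-x, y)`. -/
theorem dual_szemeredi_trotter {C : ℝ} (hC : ∀ (Λ X : Finset (ℂ × ℂ)) (ρ : ℝ), 2 ≤ ρ →
    (∀ x ∈ X, ρ ≤ ((thr Λ x).card : ℝ)) →
    (X.card : ℝ) * ρ ^ 3 ≤ C * ((Λ.card : ℝ) ^ 2 + Λ.card * ρ ^ 2))
    (Q Λ : Finset (ℂ × ℂ)) (k : ℝ) (hk : 2 ≤ k)
    (hΛ : ∀ l ∈ Λ, k ≤ ((Q.filter fun p => Inc p l).card : ℝ)) :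
    (Λ.card : ℝ) * k ^ 3 ≤ C * ((Q.card : ℝ) ^ 2 + Q.card * k ^ 2) := by
  let φ : ℂ × ℂ → ℂ × ℂ := fun p => (-p.1, p.2)
  have hφ : Function.Injective φ := by
    intro p p' h
    simp only [φ, Prod.mk.injEq, neg_inj] at h
    exact Prod.ext h.1 h.2
  have h := hC (Q.image φ) Λ k hk (by
    intro l hl
    refine (hΛ l hl).trans ?_
    rw [← Finset.card_image_of_injective _ hφ]
    norm_cast
    apply Finset.card_le_card
    intro m hm
    obtain ⟨p, hp, rfl⟩ := Finset.mem_image.1 hm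
    obtain ⟨hpQ, hpl⟩ := Finset.mem_filter.1 hp
    refine mem_thr.2 ⟨Finset.mem_image_of_mem _ hpQ, ?_⟩
    unfold Inc at hpl ⊢
    simp only [φ]
    linear_combination -hpl)
  rwa [Finset.card_image_of_injective _ hφ] at h

/-- All lines with slope in `L` through a point of `Q`. -/
noncomputable def lineSet (L : Finset ℂ) (Q : Finset (ℂ × ℂ)) : Finset (ℂ × ℂ) :=
  (L ×ˢ Q).image fun m => (m.1, m.2.2 - m.1 * m.2.1)

theorem fst_mem_of_mem_lineSet {L : Finset ℂ} {Q : Finset (ℂ × ℂ)} {l : ℂ × ℂ}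
    (h : l ∈ lineSet L Q) : l.1 ∈ L := by
  obtain ⟨m, hm, rfl⟩ := Finset.mem_image.1 h
  exact (Finset.mem_product.1 hm).1

theorem mem_lineSet {L : Finset ℂ} {Q : Finset (ℂ × ℂ)} {l p : ℂ × ℂ} (hl : l.1 ∈ L) (hp : p ∈ Q)
    (h : Inc p l) : l ∈ lineSet L Q := by
  refine Finset.mem_image.2 ⟨(l.1, p), Finset.mem_product.2 ⟨hl, hp⟩, Prod.ext rfl ?_⟩
  unfold Inc at h
  simp only
  linear_combination h

/-- The lines of `lineSet L Q` containing at least `2 ^ j` points of `Q`. -/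
noncomputable def richLines (L : Finset ℂ) (Q : Finset (ℂ × ℂ)) (j : ℕ) : Finset (ℂ × ℂ) :=
  (lineSet L Q).filter fun l => 2 ^ j ≤ (Q.filter fun p => Inc p l).card

theorem card_thr_le_slopes {L : Finset ℂ} {Λ : Finset (ℂ × ℂ)} (h : ∀ l ∈ Λ, l.1 ∈ L) (x : ℂ × ℂ) :
    (thr Λ x).card ≤ L.card := by
  refine Finset.card_le_card_of_injOn Prod.fst (fun l hl => h l (mem_thr.1 hl).1) ?_
  intro l hl m hm hlm
  exact (mem_thr.1 (Finset.mem_coe.1 hl)).2.eq_of_slope (mem_thr.1 (Finset.mem_coe.1 hm)).2 hlm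

theorem card_richLines_mul_le (L : Finset ℂ) (Q : Finset (ℂ × ℂ)) (j : ℕ) :
    (richLines L Q j).card * 2 ^ j ≤ L.card * Q.card := by
  have h := Finset.sum_card_bipartiteAbove_eq_sum_card_bipartiteBelow (s := Q)
    (t := richLines L Q j) (fun p l => Inc p l)
  unfold Finset.bipartiteAbove Finset.bipartiteBelow at h
  calc (richLines L Q j).card * 2 ^ j = ∑ l ∈ richLines L Q j, 2 ^ j := by simp
    _ ≤ ∑ l ∈ richLines L Q j, (Q.filter fun p => Inc p l).card :=
      Finset.sum_le_sum fun l hl => (Finset.mem_filter.1 hl).2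
    _ = ∑ p ∈ Q, (thr (richLines L Q j) p).card := h.symm
    _ ≤ ∑ p ∈ Q, L.card := Finset.sum_le_sum fun p _ => card_thr_le_slopes (fun l hl =>
        fst_mem_of_mem_lineSet (Finset.mem_filter.1 hl).1) p
    _ = L.card * Q.card := by simp [mul_comm]

theorem le_dyadic_sum (F w J : ℕ) (h1 : F ≤ w) (h2 : F < 2 ^ (J + 1)) :
    F ≤ ∑ j ∈ Finset.range (J + 1), if 2 ^ j ≤ w then 2 ^ j else 0 := by
  induction J generalizing F with
  | zero =>
    simp only [zero_add, pow_one, Finset.sum_range_one, pow_zero] at *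
    split_ifs <;> omega
  | succ J ih =>
    rw [Finset.sum_range_succ]
    have hpos : 0 < 2 ^ (J + 1) := by positivity
    have hdouble : 2 ^ (J + 1 + 1) = 2 * 2 ^ (J + 1) := by ring
    split_ifs with hw
    · have := ih (min F (2 ^ (J + 1) - 1)) (by omega) (by omega)
      omega
    · exact ih F h1 (by omega)

/-- The number of representations of `x` is at most a dyadic sum over the rich lines through `x`.
A pair `(p, q)` with `p` on the line of slope `l` through the origin has `q` on the line of slope
`l` through `x`. -/
theorem reps_le (L : Finset ℂ) (N : ℝ) (P Q : Finset (ℂ × ℂ))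
    (hP : ∀ p ∈ P, ∃ l ∈ L, p.2 = l * p.1)
    (hN : ∀ l ∈ L, ((P.filter fun p => p.2 = l * p.1).card : ℝ) ≤ N) (J : ℕ)
    (hJ : N < 2 ^ (J + 1)) (x : ℂ × ℂ) :
    ((P ×ˢ Q).filter fun pq => pq.1 + pq.2 = x).card ≤
      ∑ j ∈ Finset.range (J + 1), 2 ^ j * (thr (richLines L Q j) x).card := by
  let F : ℂ → Finset ((ℂ × ℂ) × (ℂ × ℂ)) := fun l =>
    (P ×ˢ Q).filter fun pq => pq.1.2 = l * pq.1.1 ∧ pq.1 + pq.2 = x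
  let w : ℂ → ℕ := fun l => (Q.filter fun p => Inc p (l, x.2 - l * x.1)).card
  have hcover : ((P ×ˢ Q).filter fun pq => pq.1 + pq.2 = x) ⊆ L.biUnion F := by
    intro m hm
    obtain ⟨hm1, hm2⟩ := Finset.mem_filter.1 hm
    obtain ⟨l, hl, hpl⟩ := hP m.1 (Finset.mem_product.1 hm1).1
    exact Finset.mem_biUnion.2 ⟨l, hl, Finset.mem_filter.2 ⟨hm1, hpl, hm2⟩⟩
  have hFw : ∀ l, (F l).card ≤ w l := by
    intro l
    refine Finset.card_le_card_of_injOn Prod.snd ?_ ?_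
    · intro m hm
      obtain ⟨hm1, hm2, hm3⟩ := Finset.mem_filter.1 (Finset.mem_coe.1 hm)
      refine Finset.mem_coe.2 (Finset.mem_filter.2 ⟨(Finset.mem_product.1 hm1).2, ?_⟩)
      subst hm3
      unfold Inc
      simp only [Prod.fst_add, Prod.snd_add]
      linear_combination -hm2
    · intro m hm m' hm' h
      obtain ⟨-, -, hm3⟩ := Finset.mem_filter.1 (Finset.mem_coe.1 hm)
      obtain ⟨-, -, hm3'⟩ := Finset.mem_filter.1 (Finset.mem_coe.1 hm')
      refine Prod.ext ?_ h
      rw [← hm3', h] at hm3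
      exact add_right_cancel hm3
  have hFN : ∀ l ∈ L, (F l).card < 2 ^ (J + 1) := by
    intro l hl
    have h1 : (F l).card ≤ (P.filter fun p => p.2 = l * p.1).card := by
      refine Finset.card_le_card_of_injOn Prod.fst ?_ ?_
      · intro m hm
        obtain ⟨hm1, hm2, -⟩ := Finset.mem_filter.1 (Finset.mem_coe.1 hm)
        exact Finset.mem_coe.2 (Finset.mem_filter.2 ⟨(Finset.mem_product.1 hm1).1, hm2⟩)
      · intro m hm m' hm' h
        obtain ⟨-, -, hm3⟩ := Finset.mem_filter.1 (Finset.mem_coe.1 hm)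
        obtain ⟨-, -, hm3'⟩ := Finset.mem_filter.1 (Finset.mem_coe.1 hm')
        refine Prod.ext h ?_
        rw [← hm3', h] at hm3
        exact add_left_cancel hm3
    have h2 : ((F l).card : ℝ) < 2 ^ (J + 1) :=
      lt_of_le_of_lt ((Nat.cast_le.2 h1).trans (hN l hl)) hJ
    exact_mod_cast h2
  have hcount : ∀ j, (L.filter fun l => 2 ^ j ≤ w l).card ≤ (thr (richLines L Q j) x).card := by
    intro j
    refine Finset.card_le_card_of_injOn (fun l => (l, x.2 - l * x.1)) ?_ ?_
    · intro l hl
      obtain ⟨hl1, hl2⟩ := Finset.mem_filter.1 (Finset.mem_coe.1 hl)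
      obtain ⟨p, hp⟩ := Finset.card_pos.1 (lt_of_lt_of_le (by positivity) hl2)
      obtain ⟨hpQ, hpl⟩ := Finset.mem_filter.1 hp
      refine Finset.mem_coe.2 (mem_thr.2 ⟨Finset.mem_filter.2 ⟨?_, hl2⟩, ?_⟩)
      · exact mem_lineSet hl1 hpQ hpl
      · unfold Inc
        ring
    · intro l _ l' _ h
      exact (Prod.mk.inj h).1
  calc _ ≤ ∑ l ∈ L, (F l).card := (Finset.card_le_card hcover).trans Finset.card_biUnion_le
    _ ≤ ∑ l ∈ L, ∑ j ∈ Finset.range (J + 1), (if 2 ^ j ≤ w l then 2 ^ j else 0) :=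
      Finset.sum_le_sum fun l hl => le_dyadic_sum _ _ _ (hFw l) (hFN l hl)
    _ = ∑ j ∈ Finset.range (J + 1), ∑ l ∈ L, (if 2 ^ j ≤ w l then 2 ^ j else 0) :=
      Finset.sum_comm
    _ = ∑ j ∈ Finset.range (J + 1), 2 ^ j * (L.filter fun l => 2 ^ j ≤ w l).card := by
      refine Finset.sum_congr rfl fun j _ => ?_
      rw [← Finset.sum_filter, Finset.sum_const, smul_eq_mul, mul_comm]
    _ ≤ _ := Finset.sum_le_sum fun j _ => Nat.mul_le_mul_left _ (hcount j)

theorem sum_geom_le {x : ℝ} (h0 : 0 ≤ x) (h1 : x < 1) (m : ℕ) :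
    ∑ j ∈ Finset.range m, x ^ j ≤ 1 / (1 - x) := by
  rw [le_div_iff₀ (by linarith), geom_sum_mul_neg]
  have : 0 ≤ x ^ m := by positivity
  linarith

theorem sum_geom_two_sided_le {x : ℝ} (h0 : 0 ≤ x) (h1 : x < 1) (m k : ℕ) :
    ∑ j ∈ Finset.range m, x ^ ((j - k) + (k - j)) ≤ 2 / (1 - x) := by
  have hpos : 0 ≤ 1 / (1 - x) := by
    have : 0 < 1 - x := by linarith
    positivity
  have key : ∀ k m : ℕ, ∑ j ∈ Finset.range m, x ^ ((j - k) + (k - j)) ≤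
      x * ∑ i ∈ Finset.range k, x ^ i + 1 / (1 - x) := by
    intro k
    induction k with
    | zero => intro m; simpa using sum_geom_le h0 h1 m
    | succ k ih =>
      intro m
      cases m with
      | zero =>
        simp only [Finset.range_zero, Finset.sum_empty]
        have : 0 ≤ ∑ i ∈ Finset.range (k + 1), x ^ i := Finset.sum_nonneg fun i _ => by positivity
        positivity
      | succ m =>
        rw [Finset.sum_range_succ', Finset.sum_range_succ (fun i => x ^ i) k]
        have := ih m
        simp only [Nat.add_sub_add_right, Nat.zero_sub, Nat.sub_zero, zero_add]
        calc _ ≤ x * ∑ i ∈ Finset.range k, x ^ i + 1 / (1 - x) + x ^ (k + 1) := by gcongr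
          _ = _ := by ring
  refine (key k m).trans ?_
  have h2 := sum_geom_le h0 h1 k
  have h3 : 0 ≤ ∑ i ∈ Finset.range k, x ^ i := Finset.sum_nonneg fun i _ => by positivity
  have h4 : (2 : ℝ) / (1 - x) = 1 / (1 - x) + 1 / (1 - x) := by ring
  rw [h4]
  nlinarith

/-! ### The bound for each dyadic level and its summation -/

/-- The arithmetic for a level `k = 2 ^ j ≤ b / a`, with `M` lines bounded trivially. -/
theorem level_low_arith {a b k M T C Z y : ℝ} (ha : 0 ≤ a) (hb : 0 ≤ b) (hk : 0 ≤ k) (hM : 0 ≤ M)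
    (hT : 0 ≤ T) (hC : 0 ≤ C) (hST : Z * T ^ 3 ≤ C * (M ^ 2 * k ^ 3 + M * k * T ^ 2))
    (hMk : M * k ≤ a ^ 2 * b ^ 2) (hT1 : T ≤ k * a ^ 2) (hT2 : T ≤ b ^ 2) (hy : k * a ≤ b * y) :
    Z * T ^ 3 ≤ 2 * C * (a ^ 3 * b ^ 5 * y) := by
  have h0 : a ^ 4 * b ^ 4 * k ≤ a ^ 3 * b ^ 5 * y := by
    calc a ^ 4 * b ^ 4 * k = a ^ 3 * b ^ 4 * (k * a) := by ring
      _ ≤ a ^ 3 * b ^ 4 * (b * y) := by gcongr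
      _ = _ := by ring
  have h1 : M ^ 2 * k ^ 3 ≤ a ^ 4 * b ^ 4 * k := by
    calc M ^ 2 * k ^ 3 = (M * k) ^ 2 * k := by ring
      _ ≤ (a ^ 2 * b ^ 2) ^ 2 * k := by gcongr
      _ = _ := by ring
  have h2 : M * k * T ^ 2 ≤ a ^ 4 * b ^ 4 * k := by
    calc M * k * T ^ 2 = M * k * (T * T) := by ring
      _ ≤ a ^ 2 * b ^ 2 * (k * a ^ 2 * b ^ 2) := by gcongr
      _ = _ := by ring
  calc Z * T ^ 3 ≤ C * (M ^ 2 * k ^ 3 + M * k * T ^ 2) := hST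
    _ ≤ C * (a ^ 3 * b ^ 5 * y + a ^ 3 * b ^ 5 * y) :=
      mul_le_mul_of_nonneg_left (add_le_add (h1.trans h0) (h2.trans h0)) hC
    _ = _ := by ring

/-- The arithmetic for a level `k = 2 ^ j ≥ b / a`, with `M` lines bounded by duality. -/
theorem level_high_arith {a b k M T C Z y z : ℝ} (ha : 1 ≤ a) (hab : a ≤ b) (hk : 0 < k)
    (hM : 0 ≤ M) (hT : 0 ≤ T) (hC : 1 ≤ C) (hz0 : 0 ≤ z) (hy0 : 0 ≤ y)
    (hST : Z * T ^ 3 ≤ C * (M ^ 2 * k ^ 3 + M * k * T ^ 2))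
    (hMk : M * k ^ 3 ≤ C * ((b ^ 2) ^ 2 + b ^ 2 * k ^ 2)) (hT1 : T ≤ k * a ^ 2) (hT2 : T ≤ b ^ 2)
    (hbk : b ≤ a * k) (hy : b ≤ 2 * (a * k * y)) (hz : k ≤ 2 * (a ^ 2 * z)) :
    Z * T ^ 3 ≤ 6 * C ^ 3 * (a ^ 3 * b ^ 5 * (y + z)) := by
  have hb : 1 ≤ b := ha.trans hab
  have hTT : T ^ 2 ≤ k * a ^ 2 * b ^ 2 := by
    calc T ^ 2 = T * T := by ring
      _ ≤ k * a ^ 2 * b ^ 2 := by gcongr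
  have e1 : b ^ 8 ≤ k ^ 3 * (2 * (a ^ 3 * b ^ 5 * y)) := by
    calc b ^ 8 = b ^ 5 * (b * b * b) := by ring
      _ ≤ b ^ 5 * (a * k * (a * k) * (2 * (a * k * y))) := by gcongr
      _ = _ := by ring
  have e2 : b ^ 4 * k ^ 4 ≤ k ^ 3 * (2 * (a ^ 3 * b ^ 5 * z)) := by
    calc b ^ 4 * k ^ 4 = k ^ 3 * (b ^ 4 * 1 * k) := by ring
      _ ≤ k ^ 3 * (b ^ 4 * b * (2 * (a ^ 2 * z))) := by gcongr
      _ = k ^ 3 * (2 * (a ^ 2 * 1 * b ^ 5 * z)) := by ring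
      _ ≤ k ^ 3 * (2 * (a ^ 2 * a * b ^ 5 * z)) := by gcongr
      _ = _ := by ring
  have f1 : M ^ 2 * k ^ 3 ≤ 4 * C ^ 2 * (a ^ 3 * b ^ 5 * (y + z)) := by
    refine le_of_mul_le_mul_left ?_ (pow_pos hk 3)
    calc k ^ 3 * (M ^ 2 * k ^ 3) = (M * k ^ 3) ^ 2 := by ring
      _ ≤ (C * ((b ^ 2) ^ 2 + b ^ 2 * k ^ 2)) ^ 2 := by gcongr
      _ ≤ 2 * C ^ 2 * (b ^ 8 + b ^ 4 * k ^ 4) := by nlinarith [sq_nonneg (C * (b ^ 4 - b ^ 2 * k ^ 2))]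
      _ ≤ 2 * C ^ 2 * (k ^ 3 * (2 * (a ^ 3 * b ^ 5 * y)) + k ^ 3 * (2 * (a ^ 3 * b ^ 5 * z))) := by
        gcongr
      _ = _ := by ring
  have f2 : M * k * T ^ 2 ≤ 2 * C * (a ^ 3 * b ^ 5 * (y + z)) := by
    refine le_of_mul_le_mul_left ?_ (pow_pos hk 2)
    calc k ^ 2 * (M * k * T ^ 2) = M * k ^ 3 * T ^ 2 := by ring
      _ ≤ C * ((b ^ 2) ^ 2 + b ^ 2 * k ^ 2) * (k * a ^ 2 * b ^ 2) := by gcongr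
      _ = C * (k * a ^ 2 * b ^ 5 * b + k ^ 2 * a ^ 2 * b ^ 4 * k) := by ring
      _ ≤ C * (k * a ^ 2 * b ^ 5 * (2 * (a * k * y)) +
          k ^ 2 * a ^ 2 * b ^ 4 * (2 * (a ^ 2 * z))) := by gcongr
      _ = C * (k ^ 2 * (2 * (a ^ 3 * b ^ 5 * y)) + k ^ 2 * (2 * (a ^ 3 * a * b ^ 4 * z))) := by ring
      _ ≤ C * (k ^ 2 * (2 * (a ^ 3 * b ^ 5 * y)) + k ^ 2 * (2 * (a ^ 3 * b * b ^ 4 * z))) := by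
        gcongr
      _ = _ := by ring
  have hA : 0 ≤ a ^ 3 * b ^ 5 * (y + z) := by positivity
  calc Z * T ^ 3 ≤ C * (M ^ 2 * k ^ 3 + M * k * T ^ 2) := hST
    _ ≤ C * (4 * C ^ 2 * (a ^ 3 * b ^ 5 * (y + z)) + 2 * C * (a ^ 3 * b ^ 5 * (y + z))) := by gcongr
    _ = (4 * C ^ 3 + 2 * C ^ 2) * (a ^ 3 * b ^ 5 * (y + z)) := by ring
    _ ≤ _ := by
      gcongr
      nlinarith [pow_pos (lt_of_lt_of_le one_pos hC) 2]

theorem two_pow_eq_mul_half_pow {i j : ℕ} (h : i ≤ j) :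
    (2 : ℝ) ^ i = 2 ^ j * (1 / 2) ^ (j - i) := by
  obtain ⟨d, rfl⟩ := Nat.exists_eq_add_of_le h
  rw [Nat.add_sub_cancel_left, pow_add, mul_assoc, ← mul_pow]
  norm_num

/-- The bound for the points that are rich with respect to the lines of the dyadic level `j`. Here
`j₀` is the level where `2 ^ j₀` is about `√(|Q| / |L|)`, and `J` is the top level. -/
theorem level_bound {C : ℝ} (hC1 : 1 ≤ C) (hC : ∀ (Λ X : Finset (ℂ × ℂ)) (ρ : ℝ), 2 ≤ ρ →
    (∀ x ∈ X, ρ ≤ ((thr Λ x).card : ℝ)) →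
    (X.card : ℝ) * ρ ^ 3 ≤ C * ((Λ.card : ℝ) ^ 2 + Λ.card * ρ ^ 2))
    (L : Finset ℂ) (Q X : Finset (ℂ × ℂ)) (a b T : ℝ) (j j₀ J : ℕ) (ha : 1 ≤ a) (hab : a ≤ b)
    (hL : (L.card : ℝ) = a ^ 2) (hQ : (Q.card : ℝ) = b ^ 2) (hjJ : j ≤ J)
    (hj₀ : 2 ^ j₀ ≤ b / a) (hj₀' : b / a < 2 ^ (j₀ + 1)) (hJ : (2 : ℝ) ^ J ≤ 2 * a ^ 2)
    (hT : 2 * 2 ^ j ≤ T) (hTb : T ≤ b ^ 2)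
    (hX : ∀ x ∈ X, T ≤ 2 ^ j * ((thr (richLines L Q j) x).card : ℝ)) :
    (X.card : ℝ) * T ^ 3 ≤
      6 * C ^ 3 * (a ^ 3 * b ^ 5 * ((1 / 2) ^ ((j - j₀) + (j₀ - j)) + (1 / 2) ^ (J - j))) := by
  have hb : 1 ≤ b := ha.trans hab
  rcases X.eq_empty_or_nonempty with rfl | ⟨x₀, hx₀⟩
  · simp only [Finset.card_empty, Nat.cast_zero, zero_mul]
    positivity
  have hk : (0 : ℝ) < 2 ^ j := by positivity
  obtain ⟨k, hkdef⟩ : ∃ k : ℝ, k = 2 ^ j := ⟨_, rfl⟩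
  rw [← hkdef] at hT hk
  simp only [← hkdef] at hX
  have hT0 : 0 < T := by linarith
  have hthr : ∀ x, (((thr (richLines L Q j) x).card : ℕ) : ℝ) ≤ a ^ 2 := fun x => by
    rw [← hL]
    exact_mod_cast card_thr_le_slopes
      (fun l hl => fst_mem_of_mem_lineSet (Finset.mem_filter.1 hl).1) x
  have hT1 : T ≤ k * a ^ 2 := (hX x₀ hx₀).trans (by gcongr; exact hthr x₀)
  set M : ℝ := ((richLines L Q j).card : ℝ) with hM
  have hM0 : 0 ≤ M := by positivity
  have hMk : M * k ≤ a ^ 2 * b ^ 2 := by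
    rw [← hL, ← hQ, hkdef, hM]
    exact_mod_cast card_richLines_mul_le L Q j
  have hST : (X.card : ℝ) * T ^ 3 ≤ C * (M ^ 2 * k ^ 3 + M * k * T ^ 2) := by
    have h := hC (richLines L Q j) X (T / k) (by rw [le_div_iff₀ hk]; exact hT) (by
      intro x hx
      rw [div_le_iff₀ hk, mul_comm]
      exact hX x hx)
    have e : (X.card : ℝ) * T ^ 3 = X.card * (T / k) ^ 3 * k ^ 3 := by field_simp
    rw [e]
    calc (X.card : ℝ) * (T / k) ^ 3 * k ^ 3 ≤ C * (M ^ 2 + M * (T / k) ^ 2) * k ^ 3 := by gcongr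
      _ = _ := by field_simp
  have ha0 : 0 < a := by linarith
  rcases le_or_gt j j₀ with hjj | hjj
  · have e0 : j - j₀ + (j₀ - j) = j₀ - j := by omega
    rw [e0]
    have hy : k * a ≤ b * (1 / 2) ^ (j₀ - j) := by
      have e1 : k = 2 ^ j₀ * (1 / 2) ^ (j₀ - j) := by
        rw [hkdef]
        exact two_pow_eq_mul_half_pow hjj
      rw [le_div_iff₀ ha0] at hj₀
      calc k * a = 2 ^ j₀ * a * (1 / 2) ^ (j₀ - j) := by rw [e1]; ring
        _ ≤ b * (1 / 2) ^ (j₀ - j) := by gcongr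
    have := level_low_arith ha0.le (by linarith) hk.le hM0 hT0.le (by linarith) hST hMk hT1 hTb hy
    refine this.trans ?_
    have hCC : 2 * C ≤ 6 * C ^ 3 := by nlinarith [sq_nonneg (C - 1), pow_pos (lt_of_lt_of_le one_pos hC1) 2]
    gcongr
    have : (0 : ℝ) ≤ (1 / 2) ^ (J - j) := by positivity
    linarith
  · have e0 : j - j₀ + (j₀ - j) = j - j₀ := by omega
    rw [e0]
    rw [div_lt_iff₀ ha0] at hj₀'
    have hk2 : (2 : ℝ) ^ (j₀ + 1) ≤ k := by
      rw [hkdef]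
      exact pow_le_pow_right₀ (by norm_num) hjj
    have hy : b ≤ 2 * (a * k * (1 / 2) ^ (j - j₀)) := by
      have e1 : (2 : ℝ) ^ j₀ = k * (1 / 2) ^ (j - j₀) := by
        rw [hkdef]
        exact two_pow_eq_mul_half_pow hjj.le
      calc b ≤ 2 ^ (j₀ + 1) * a := hj₀'.le
        _ = 2 * (a * 2 ^ j₀) := by ring
        _ = _ := by rw [e1]; ring
    have hz : k ≤ 2 * (a ^ 2 * (1 / 2) ^ (J - j)) := by
      have e1 : k = 2 ^ J * (1 / 2) ^ (J - j) := by
        rw [hkdef]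
        exact two_pow_eq_mul_half_pow hjJ
      calc k = 2 ^ J * (1 / 2) ^ (J - j) := e1
        _ ≤ 2 * a ^ 2 * (1 / 2) ^ (J - j) := by gcongr
        _ = _ := by ring
    have hkk : 2 ≤ k := by
      refine le_trans ?_ hk2
      calc (2 : ℝ) = 2 ^ 1 := by norm_num
        _ ≤ 2 ^ (j₀ + 1) := pow_le_pow_right₀ (by norm_num) (by omega)
    have hdual := dual_szemeredi_trotter hC Q (richLines L Q j) k hkk (by
      intro l hl
      rw [hkdef]
      exact_mod_cast (Finset.mem_filter.1 hl).2)
    rw [hQ] at hdual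
    exact level_high_arith ha hab hk hM0 hT0.le hC1 (by positivity) (by positivity) hST hdual hT1 hTb
      (hj₀'.le.trans (by rw [mul_comm]; gcongr)) hy hz

/-- The decay of the level bounds pays for the cubes of the weights and leaves a summable factor;
the reason is `1 / 2 ≤ 3 / 4 * (7 / 8) ^ 3`. -/
theorem weights_arith (d e : ℕ) : ((1 / 2 : ℝ) ^ d + (1 / 2) ^ e) ≤
    ((3 / 4) ^ d + (3 / 4) ^ e) * ((7 / 8) ^ d + (7 / 8) ^ e) ^ 3 := by
  have key : ∀ d e : ℕ, (1 / 2 : ℝ) ^ d ≤ (3 / 4) ^ d * ((7 / 8) ^ d + (7 / 8) ^ e) ^ 3 := by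
    intro d e
    calc (1 / 2 : ℝ) ^ d ≤ (3 / 4 * (7 / 8) ^ 3) ^ d := by gcongr; norm_num
      _ = (3 / 4) ^ d * ((7 / 8) ^ d) ^ 3 := by rw [mul_pow, ← pow_mul, ← pow_mul, mul_comm 3 d]
      _ ≤ _ := by
        gcongr
        have : (0 : ℝ) ≤ (7 / 8) ^ e := by positivity
        linarith
  have h1 := key d e
  have h2 := key e d
  rw [add_comm ((7 / 8 : ℝ) ^ e)] at h2
  rw [add_mul]
  exact add_le_add h1 h2

theorem weighted_ST_rich_sums_bound :
    ∃ C C' : ℝ, 0 < C ∧ 0 < C' ∧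
      ∀ L : Finset ℂ, L.Nonempty →
      ∀ N : ℝ, 1 ≤ N →
      ∀ P Q : Finset (ℂ × ℂ),
        (∀ p ∈ P, ∃ l ∈ L, p.2 = l * p.1) →
        (∀ l ∈ L, ((P.filter fun p => p.2 = l * p.1).card : ℝ) ≤ N) →
        P.card ≤ Q.card → L.card ≤ P.card → N / 2 ≤ (L.card : ℝ) →
        ∀ t : ℝ, C * N ≤ t → t ≤ (P.card : ℝ) →
          ({x : ℂ × ℂ |
              t ≤ (((P ×ˢ Q).filter fun pq => pq.1 + pq.2 = x).card : ℝ)}.ncard : ℝ) ≤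
            C' * (L.card : ℝ) ^ ((3 : ℝ) / 2) * (Q.card : ℝ) ^ ((5 : ℝ) / 2) / t ^ 3 := by
  obtain ⟨C, hC1, hC⟩ := szemeredi_trotter
  have hC0 : 0 < C := by linarith
  refine ⟨48, 6 * C ^ 3 * 24 ^ 3 * 12, by norm_num, by positivity, ?_⟩
  intro L hLne N hN P Q hP hPN hPQ hLP hNL t ht htP
  have ht0 : 0 < t := by linarith
  obtain ⟨a, ha⟩ : ∃ a, a = √(L.card : ℝ) := ⟨_, rfl⟩
  obtain ⟨b, hb⟩ : ∃ b, b = √(Q.card : ℝ) := ⟨_, rfl⟩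
  have hLa : (L.card : ℝ) = a ^ 2 := by rw [ha, Real.sq_sqrt (Nat.cast_nonneg _)]
  have hQb : (Q.card : ℝ) = b ^ 2 := by rw [hb, Real.sq_sqrt (Nat.cast_nonneg _)]
  have hL1 : (1 : ℝ) ≤ L.card := by exact_mod_cast hLne.card_pos
  have ha1 : 1 ≤ a := ha ▸ Real.one_le_sqrt.2 hL1
  have hab : a ≤ b := by
    rw [ha, hb]
    exact Real.sqrt_le_sqrt (by exact_mod_cast hLP.trans hPQ)
  have hPb : (P.card : ℝ) ≤ b ^ 2 := by rw [← hQb]; exact_mod_cast hPQ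
  have hLpow : (L.card : ℝ) ^ ((3 : ℝ) / 2) = a ^ 3 := by
    rw [ha, Real.sqrt_eq_rpow, ← Real.rpow_natCast, ← Real.rpow_mul (Nat.cast_nonneg _)]
    norm_num
  have hQpow : (Q.card : ℝ) ^ ((5 : ℝ) / 2) = b ^ 5 := by
    rw [hb, Real.sqrt_eq_rpow, ← Real.rpow_natCast, ← Real.rpow_mul (Nat.cast_nonneg _)]
    norm_num
  obtain ⟨J, hJ1, hJ2⟩ := exists_nat_pow_near hN (one_lt_two (α := ℝ))
  obtain ⟨j₀, hj1, hj2⟩ := exists_nat_pow_near (x := b / a) (y := (2 : ℝ))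
    (by rw [le_div_iff₀ (by linarith)]; linarith) one_lt_two
  -- The threshold `T j` assigned to level `j`; the weights sum to at most `24`.
  let T : ℕ → ℝ := fun j => t / 24 * ((7 / 8) ^ ((j - j₀) + (j₀ - j)) + (7 / 8) ^ (J - j))
  have hrefl : ∀ x : ℝ, ∑ j ∈ Finset.range (J + 1), x ^ (J - j) =
      ∑ j ∈ Finset.range (J + 1), x ^ j := by
    intro x
    rw [← Finset.sum_range_reflect]
    refine Finset.sum_congr rfl fun j hj => ?_
    congr 1
    have := Finset.mem_range.1 hj
    omega
  have hTsum : ∑ j ∈ Finset.range (J + 1), T j ≤ t := by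
    have h1 := sum_geom_two_sided_le (x := 7 / 8) (by norm_num) (by norm_num) (J + 1) j₀
    have h2 := sum_geom_le (x := 7 / 8) (by norm_num) (by norm_num) (J + 1)
    rw [← hrefl] at h2
    simp only [T]
    rw [← Finset.mul_sum, Finset.sum_add_distrib]
    norm_num at h1 h2 ⊢
    nlinarith
  let Z : Finset (ℂ × ℂ) := (P ×ˢ Q).image fun pq => pq.1 + pq.2
  let X : ℕ → Finset (ℂ × ℂ) := fun j =>
    Z.filter fun x => T j ≤ 2 ^ j * ((thr (richLines L Q j) x).card : ℝ)
  have hcover : {x : ℂ × ℂ | t ≤ (((P ×ˢ Q).filter fun pq => pq.1 + pq.2 = x).card : ℝ)} ⊆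
      ((Finset.range (J + 1)).biUnion X : Finset (ℂ × ℂ)) := by
    intro x hx
    have hx' : t ≤ (((P ×ˢ Q).filter fun pq => pq.1 + pq.2 = x).card : ℝ) := hx
    have hreps : (((P ×ˢ Q).filter fun pq => pq.1 + pq.2 = x).card : ℝ) ≤
        ∑ j ∈ Finset.range (J + 1), 2 ^ j * ((thr (richLines L Q j) x).card : ℝ) := by
      exact_mod_cast reps_le L N P Q hP hPN J hJ2 x
    obtain ⟨j, hj, hle⟩ := Finset.exists_le_of_sum_le ⟨0, Finset.mem_range.2 (Nat.succ_pos J)⟩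
      (hTsum.trans (hx'.trans hreps))
    refine Finset.mem_coe.2 (Finset.mem_biUnion.2 ⟨j, hj, Finset.mem_filter.2 ⟨?_, hle⟩⟩)
    have hpos : 0 < ((P ×ˢ Q).filter fun pq => pq.1 + pq.2 = x).card := by
      exact_mod_cast lt_of_lt_of_le ht0 hx'
    obtain ⟨m, hm⟩ := Finset.card_pos.1 hpos
    obtain ⟨hm1, hm2⟩ := Finset.mem_filter.1 hm
    exact Finset.mem_image.2 ⟨m, hm1, hm2⟩
  have hlevel : ∀ j ∈ Finset.range (J + 1), ((X j).card : ℝ) ≤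
      6 * C ^ 3 * 24 ^ 3 * (a ^ 3 * b ^ 5) / t ^ 3 *
        ((3 / 4) ^ ((j - j₀) + (j₀ - j)) + (3 / 4) ^ (J - j)) := by
    intro j hj
    have hjJ : j ≤ J := Nat.lt_succ_iff.1 (Finset.mem_range.1 hj)
    obtain ⟨d, hd⟩ : ∃ d, d = (j - j₀) + (j₀ - j) := ⟨_, rfl⟩
    obtain ⟨e, he⟩ : ∃ e, e = J - j := ⟨_, rfl⟩
    have hTj : T j = t / 24 * ((7 / 8) ^ d + (7 / 8) ^ e) := by simp only [T, hd, he]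
    have hd1 : (7 / 8 : ℝ) ^ d ≤ 1 := pow_le_one₀ (by norm_num) (by norm_num)
    have he1 : (7 / 8 : ℝ) ^ e ≤ 1 := pow_le_one₀ (by norm_num) (by norm_num)
    have hd0 : (0 : ℝ) < (7 / 8) ^ d := by positivity
    have he0 : (0 : ℝ) < (7 / 8) ^ e := by positivity
    have hT2 : 2 * 2 ^ j ≤ T j := by
      have h1 : (2 : ℝ) ^ j ≤ 2 ^ J * (7 / 8) ^ e := by
        have : (2 : ℝ) ^ J = 2 ^ j * 2 ^ e := by rw [← pow_add, he]; congr 1; omega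
        rw [this, mul_assoc, ← mul_pow]
        exact le_mul_of_one_le_right (by positivity) (one_le_pow₀ (by norm_num))
      calc 2 * 2 ^ j ≤ 2 * (2 ^ J * (7 / 8 : ℝ) ^ e) := by gcongr
        _ ≤ 2 * (N * (7 / 8 : ℝ) ^ e) := by gcongr
        _ = 48 * N / 24 * (0 + (7 / 8) ^ e) := by ring
        _ ≤ t / 24 * ((7 / 8) ^ d + (7 / 8) ^ e) := by gcongr
        _ = T j := hTj.symm
    have hTb : T j ≤ b ^ 2 := by
      rw [hTj]
      nlinarith
    have hmain := level_bound hC1 hC L Q (X j) a b (T j) j j₀ J ha1 hab hLa hQb hjJ hj1 hj2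
      (by rw [← hLa]; linarith) hT2 hTb (fun x hx => (Finset.mem_filter.1 hx).2)
    rw [← hd, ← he, hTj] at hmain
    rw [← hd, ← he]
    have hW := weights_arith d e
    set W : ℝ := (7 / 8) ^ d + (7 / 8) ^ e with hWdef
    have hW0 : 0 < W := by positivity
    refine le_of_mul_le_mul_right (a := (t / 24 * W) ^ 3) ?_ (by positivity)
    refine hmain.trans ?_
    calc 6 * C ^ 3 * (a ^ 3 * b ^ 5 * ((1 / 2) ^ d + (1 / 2) ^ e))
        ≤ 6 * C ^ 3 * (a ^ 3 * b ^ 5 * (((3 / 4) ^ d + (3 / 4) ^ e) * W ^ 3)) := by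
          have : 0 < b := by linarith
          gcongr
      _ = _ := by field_simp
  have hγ : ∑ j ∈ Finset.range (J + 1),
      ((3 / 4 : ℝ) ^ ((j - j₀) + (j₀ - j)) + (3 / 4) ^ (J - j)) ≤ 12 := by
    have h1 := sum_geom_two_sided_le (x := 3 / 4) (by norm_num) (by norm_num) (J + 1) j₀
    have h2 := sum_geom_le (x := 3 / 4) (by norm_num) (by norm_num) (J + 1)
    rw [← hrefl] at h2
    rw [Finset.sum_add_distrib]
    norm_num at h1 h2 ⊢
    linarith
  rw [hLpow, hQpow]
  calc _ ≤ (((Finset.range (J + 1)).biUnion X).card : ℝ) := by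
        rw [← Set.ncard_coe_finset]
        exact_mod_cast Set.ncard_le_ncard hcover (Finset.finite_toSet _)
    _ ≤ ∑ j ∈ Finset.range (J + 1), ((X j).card : ℝ) := by exact_mod_cast Finset.card_biUnion_le
    _ ≤ ∑ j ∈ Finset.range (J + 1), 6 * C ^ 3 * 24 ^ 3 * (a ^ 3 * b ^ 5) / t ^ 3 *
        ((3 / 4) ^ ((j - j₀) + (j₀ - j)) + (3 / 4) ^ (J - j)) := Finset.sum_le_sum hlevel
    _ = 6 * C ^ 3 * 24 ^ 3 * (a ^ 3 * b ^ 5) / t ^ 3 * ∑ j ∈ Finset.range (J + 1),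
        ((3 / 4) ^ ((j - j₀) + (j₀ - j)) + (3 / 4) ^ (J - j)) := by rw [Finset.mul_sum]
    _ ≤ 6 * C ^ 3 * 24 ^ 3 * (a ^ 3 * b ^ 5) / t ^ 3 * 12 := by
        have : 0 ≤ b := by linarith
        gcongr
    _ = _ := by ring
end
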